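/- arXiv:1805.03566 — 3 statements merged into one kernel-verified Lean document; each statement's English description precedes it below -/
import Mathlib

section
/- Let ν be a lattice path with m east and n north steps. The map μ ↦ b(μ) is an order isomorphism from the ν-Tamari lattice Tam(ν) onto the set of ν-bracket vectors ordered componentwise; in particular, the componentwise order on ν-bracket vectors is a lattice isomorphic to the ν-Tamari lattice. -/
open scoped Classical

/-! Lattice paths: `true` = north step, `false` = east step. -/

def eastSteps (ν : List Bool) : ℕ := ν.count false
def northSteps (ν : List Bool) : ℕ := ν.count true

/-- Height at which the path first reaches abscissa `x`. -/
def heightAt : List Bool → ℕ → ℕ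
  | _, 0 => 0
  | [], _ + 1 => 0
  | true :: rest, x + 1 => heightAt rest (x + 1) + 1
  | false :: rest, x + 1 => heightAt rest x

/-- Lattice point of a path after `i` steps. -/
def pointAt (μ : List Bool) (i : ℕ) : ℕ × ℕ :=
  ((μ.take i).count false, (μ.take i).count true)

/-- The set `A_ν` of lattice points weakly above `ν`. -/
def APts (ν : List Bool) : Set (ℕ × ℕ) :=
  {p | p.1 ≤ eastSteps ν ∧ heightAt ν p.1 ≤ p.2 ∧ p.2 ≤ northSteps ν}

def Incompatible (ν : List Bool) (p q : ℕ × ℕ) : Prop :=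
  (p.1 < q.1 ∧ p.2 < q.2 ∧ (q.1, p.2) ∈ APts ν) ∨
    (q.1 < p.1 ∧ q.2 < p.2 ∧ (p.1, q.2) ∈ APts ν)

def Compatible (ν : List Bool) (p q : ℕ × ℕ) : Prop := ¬ Incompatible ν p q

def IsNuTree (ν : List Bool) (T : Set (ℕ × ℕ)) : Prop :=
  T ⊆ APts ν ∧ T.Pairwise (Compatible ν) ∧
    ∀ T', T' ⊆ APts ν → T'.Pairwise (Compatible ν) → T ⊆ T' → T' = T

def IsRightRotationAt (T T' : Set (ℕ × ℕ)) (q q' : ℕ × ℕ) : Prop :=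
  ∃ x y x'' y', q = (x, y) ∧ q' = (x'', y') ∧ x < x'' ∧ y < y' ∧
    (x, y) ∈ T ∧ (x, y') ∈ T ∧ (x'', y) ∈ T ∧
    (∀ b, y < b → b < y' → (x, b) ∉ T) ∧
    (∀ a, x < a → a < x'' → (a, y) ∉ T) ∧
    (∀ a, x < a → a < x'' → (a, y') ∉ T) ∧
    (∀ b, y < b → b < y' → (x'', b) ∉ T) ∧
    T' = (T \ {(x, y)}) ∪ {(x'', y')}

def IsRightRotation (T T' : Set (ℕ × ℕ)) : Prop :=
  ∃ q q', IsRightRotationAt T T' q q'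

/-- Order relation of the rotation poset of ν-trees. -/
def TreeLE (ν : List Bool) : Set (ℕ × ℕ) → Set (ℕ × ℕ) → Prop :=
  Relation.ReflTransGen fun A B => IsNuTree ν A ∧ IsNuTree ν B ∧ IsRightRotation A B

def IsNuPath (ν μ : List Bool) : Prop :=
  eastSteps μ = eastSteps ν ∧ northSteps μ = northSteps ν ∧
    ∀ i ≤ μ.length, pointAt μ i ∈ APts ν

noncomputable def horiz (ν : List Bool) (p : ℕ × ℕ) : ℕ :=
  sSup {k | (p.1 + k, p.2) ∈ APts ν}

/-- Covering relation of the ν-Tamari lattice. -/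
def TamariCover (ν μ μ' : List Bool) : Prop :=
  IsNuPath ν μ ∧ IsNuPath ν μ' ∧
    ∃ i j, 0 < i ∧ i < j ∧ j ≤ μ.length ∧
      μ.getD (i - 1) true = false ∧ μ.getD i false = true ∧
      horiz ν (pointAt μ j) = horiz ν (pointAt μ i) ∧
      (∀ k, i < k → k < j → horiz ν (pointAt μ k) ≠ horiz ν (pointAt μ i)) ∧
      μ' = μ.take (i - 1) ++ (μ.drop i).take (j - i) ++ [false] ++ μ.drop j

def TamariLE (ν : List Bool) : List Bool → List Bool → Prop :=
  Relation.ReflTransGen (TamariCover ν)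

/-! Flushing maps -/

def rowAvail (ν : List Bool) (y : ℕ) : List ℕ :=
  ((List.range (eastSteps ν + 1)).filter fun x => decide (heightAt ν x ≤ y)).reverse

def pointsAtHeight (μ : List Bool) (y : ℕ) : ℕ :=
  ((List.range (μ.length + 1)).filter fun i => decide ((μ.take i).count true = y)).length

def rflushAux (ν : List Bool) : List ℕ → ℕ → List ℕ → List (ℕ × ℕ)
  | [], _, _ => []
  | c :: rest, y, forbidden =>
    let placed := ((rowAvail ν y).filter fun x => decide (x ∉ forbidden)).take c
    placed.map (fun x => (x, y)) ++ rflushAux ν rest (y + 1) (forbidden ++ placed.dropLast)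

/-- Right-flushing map `R`. -/
def Rflush (ν μ : List Bool) : Set (ℕ × ℕ) :=
  {p | p ∈ rflushAux ν ((List.range (northSteps ν + 1)).map (pointsAtHeight μ)) 0 []}

def lflushAux (m : ℕ) : List ℕ → ℕ → List ℕ → List (ℕ × ℕ)
  | [], _, _ => []
  | c :: rest, y, forbidden =>
    let placed := ((List.range (m + 1)).filter fun x => decide (x ∉ forbidden)).take c
    placed.map (fun x => (x, y)) ++ lflushAux m rest (y + 1) (forbidden ++ placed.dropLast)

noncomputable def rowCount (T : Set (ℕ × ℕ)) (y : ℕ) : ℕ := {x | (x, y) ∈ T}.ncard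

/-- Left-flushing map `L`. -/
noncomputable def Lflush (ν : List Bool) (T : Set (ℕ × ℕ)) : Set (ℕ × ℕ) :=
  {p | p ∈ lflushAux (eastSteps ν) ((List.range (northSteps ν + 1)).map (rowCount T)) 0 []}

def pathPointSet (μ : List Bool) : Set (ℕ × ℕ) := {p | ∃ i ≤ μ.length, pointAt μ i = p}

/-! Bracket vectors (0-indexed positions `0,…,ℓ`). -/

noncomputable def fpos (ν : List Bool) (k : ℕ) : ℕ :=
  sSup {i | i ≤ ν.length ∧ (ν.take i).count true = k}

def bmin (ν : List Bool) : List ℕ :=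
  (List.range (ν.length + 1)).map fun i => (ν.take i).count true

def IsBracketVector (ν : List Bool) (b : List ℕ) : Prop :=
  b.length = ν.length + 1 ∧
    (∀ k ≤ northSteps ν, b.getD (fpos ν k) 0 = k) ∧
    (∀ i < b.length, (bmin ν).getD i 0 ≤ b.getD i 0 ∧ b.getD i 0 ≤ northSteps ν) ∧
    ∀ i j k, i < j → j < k → k < b.length →
      ¬(b.getD i 0 = b.getD k 0 ∧ b.getD i 0 < b.getD j 0)

noncomputable def leftChild (T : Set (ℕ × ℕ)) (p : ℕ × ℕ) : Option (ℕ × ℕ) :=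
  if ∃ b, (p.1, b) ∈ T ∧ b < p.2 then some (p.1, sSup {b | (p.1, b) ∈ T ∧ b < p.2})
  else none

noncomputable def rightChild (T : Set (ℕ × ℕ)) (p : ℕ × ℕ) : Option (ℕ × ℕ) :=
  if ∃ a, (a, p.2) ∈ T ∧ p.1 < a then
    if ∃ b, (sInf {a | (a, p.2) ∈ T ∧ p.1 < a}, b) ∈ T ∧ p.2 < b then none
    else some (sInf {a | (a, p.2) ∈ T ∧ p.1 < a}, p.2)
  else none

noncomputable def inorderAux (T : Set (ℕ × ℕ)) : ℕ → ℕ × ℕ → List (ℕ × ℕ)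
  | 0, _ => []
  | fuel + 1, p =>
    (match leftChild T p with
      | none => []
      | some l => inorderAux T fuel l) ++ p ::
      (match rightChild T p with
        | none => []
        | some r => inorderAux T fuel r)

/-- Bracket vector of a ν-tree: y-coordinates read in in-order from the root `(0,n)`. -/
noncomputable def bracketOfTree (ν : List Bool) (T : Set (ℕ × ℕ)) : List ℕ :=
  (inorderAux T T.ncard (0, northSteps ν)).map Prod.snd

noncomputable def bracketAssign (ν μ : List Bool) : List (ℕ × ℕ) :=
  ((List.range (northSteps ν + 1)).foldl
    (fun (st : List (ℕ × ℕ) × List ℕ) k =>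
      let picked := ((st.2.filter fun i => decide (i ≤ fpos ν k)).reverse).take
        (pointsAtHeight μ k)
      (st.1 ++ picked.map fun i => (i, k), st.2.filter fun i => decide (i ∉ picked)))
    ([], List.range (ν.length + 1))).1

/-- Bracket vector of a ν-path. -/
noncomputable def bracketOfPath (ν μ : List Bool) : List ℕ :=
  (List.range (ν.length + 1)).map fun i => ((bracketAssign ν μ).lookup i).getD 0

/-- Componentwise order on (equal length) integer vectors. -/
def listLE (b b' : List ℕ) : Prop :=
  b.length = b'.length ∧ ∀ i, b.getD i 0 ≤ b'.getD i 0

/-! Reversal -/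

def revPath (ν : List Bool) : List Bool := ν.reverse.map fun s => !s

def revTree (ν : List Bool) (T : Set (ℕ × ℕ)) : Set (ℕ × ℕ) :=
  (fun p : ℕ × ℕ => (northSteps ν - p.2, eastSteps ν - p.1)) '' T

/-! Pipe dreams and subword complexes -/

def dOf (ν : List Bool) (p : ℕ × ℕ) : ℕ := p.1 + (northSteps ν - p.2)

def labelPerm (ν : List Bool) (p : ℕ × ℕ) : Equiv.Perm ℕ :=
  Equiv.swap (dOf ν p + 1) (dOf ν p + 2)

/-- The points of `A_ν` in reading order: rows from bottom to top, each left to right. -/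
def readingList (ν : List Bool) : List (ℕ × ℕ) :=
  ((List.range (northSteps ν + 1)).map fun y =>
    ((List.range (eastSteps ν + 1)).filter fun x => decide (heightAt ν x ≤ y)).map
      fun x => (x, y)).flatten

/-- The minimal ν-tree. -/
def TminSet (ν : List Bool) : Set (ℕ × ℕ) :=
  {p | p ∈ APts ν ∧ (p.1 = 0 ∨ ∃ i < ν.length, ν.getD i true = false ∧ p = pointAt ν (i + 1))}

noncomputable def prodOver (ν : List Bool) (C : Set (ℕ × ℕ)) : Equiv.Perm ℕ :=
  (((readingList ν).filter fun p => decide (p ∈ C)).map (labelPerm ν)).prod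

/-- Coxeter length: number of inversions. -/
noncomputable def lenInv (π : Equiv.Perm ℕ) : ℕ :=
  {q : ℕ × ℕ | q.1 < q.2 ∧ π q.2 < π q.1}.ncard

noncomputable def piNu (ν : List Bool) : Equiv.Perm ℕ := prodOver ν (APts ν \ TminSet ν)

def Qword (ν : List Bool) : List (Equiv.Perm ℕ) := (readingList ν).map (labelPerm ν)

noncomputable def prodAt (Q : List (Equiv.Perm ℕ)) (P : Finset ℕ) : Equiv.Perm ℕ :=
  (((List.range Q.length).filter fun i => decide (i ∈ P)).map fun i => Q.getD i 1).prod

def IsFacet (Q : List (Equiv.Perm ℕ)) (π : Equiv.Perm ℕ) (I : Finset ℕ) : Prop :=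
  I ⊆ Finset.range Q.length ∧
    prodAt Q (Finset.range Q.length \ I) = π ∧
    (Finset.range Q.length \ I).card = lenInv π

def IncFlip (Q : List (Equiv.Perm ℕ)) (π : Equiv.Perm ℕ) (I J : Finset ℕ) : Prop :=
  IsFacet Q π I ∧ IsFacet Q π J ∧ ∃ i ∈ I, ∃ j ∈ J, i < j ∧ I.erase i = J.erase j

def FlipLE (Q : List (Equiv.Perm ℕ)) (π : Equiv.Perm ℕ) : Finset ℕ → Finset ℕ → Prop :=
  Relation.ReflTransGen (IncFlip Q π)

/-- The maximal ν-tree. -/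
def TmaxSet (ν : List Bool) : Set (ℕ × ℕ) :=
  {p | (p.1 ≤ eastSteps ν ∧ p.2 = northSteps ν) ∨ ∃ i < ν.length, ν.getD i false = true ∧ p = pointAt ν i}

/-!
A `ν`-path and a `ν`-bracket vector are both determined by the numbers `c k` of their points at
height `< k`, respectively of their entries `< k`, and both satisfy the same constraints
`c k < c (k + 1) ≤ f_k + 1`. The positions `≤ f_k` left unassigned by the greedy filling form a
stack, and 121-avoidance says precisely that a bracket vector is the greedy filling of its content:
its entry at `i` is the first `k ≥ h(i)` at which the stack has dropped to its size below `i`, where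
`h(i)` is the height of the `i`-th point of `ν`.

Rotating `μ` at a valley of height `k` replaces one value `k` by the first later value `v` whose
stack is no larger than that of `k`. On bracket vectors this raises a single entry, the first one
equal to `k`, to `v`. Conversely, let `b ≤ d` be bracket vectors with `b ≠ d`. The first entry
at which they differ is the first of at least two occurrences of its value in `b`, and 121-avoidance
of `d` shows that raising it does not overtake `d`. So `d` is reached from `b` by finitely many
rotations.
-/

/-! ### Heights along a path -/

/-- The height of the `i`-th lattice point of a path. -/
def pathHeight (μ : List Bool) (i : ℕ) : ℕ := (μ.take i).count true

@[simp]
theorem pathHeight_zero (μ : List Bool) : pathHeight μ 0 = 0 := by simp [pathHeight]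

theorem pathHeight_mono (μ : List Bool) : Monotone (pathHeight μ) := fun _ _ h =>
  (List.take_sublist_take_left h).count_le true

theorem pathHeight_append (μ μ' : List Bool) (i : ℕ) :
    pathHeight (μ ++ μ') i = pathHeight μ i + pathHeight μ' (i - μ.length) := by
  simp [pathHeight, List.take_append]

theorem pathHeight_take (μ : List Bool) (a i : ℕ) :
    pathHeight (μ.take a) i = pathHeight μ (min i a) := by
  simp [pathHeight, List.take_take]

theorem pathHeight_drop (μ : List Bool) (a i : ℕ) :
    pathHeight (μ.drop a) i = pathHeight μ (a + i) - pathHeight μ a := by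
  simp [pathHeight, List.take_add]

theorem pathHeight_succ (μ : List Bool) (i : ℕ) :
    pathHeight μ (i + 1) = pathHeight μ i + if μ.getD i false = true then 1 else 0 := by
  rw [pathHeight, List.take_add_one, List.count_append, List.getD_eq_getElem?_getD, pathHeight]
  rcases μ[i]? with _ | _ | _ <;> simp

theorem pathHeight_succ_le (μ : List Bool) (i : ℕ) :
    pathHeight μ (i + 1) ≤ pathHeight μ i + 1 := by
  rw [pathHeight_succ]
  split_ifs <;> lia

theorem getD_eq_true_iff_pathHeight_succ {μ : List Bool} {i : ℕ} (hi : i < μ.length) (d : Bool) :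
    μ.getD i d = true ↔ pathHeight μ (i + 1) = pathHeight μ i + 1 := by
  rw [pathHeight_succ, List.getD_eq_getElem _ _ hi, List.getD_eq_getElem _ _ hi]
  cases μ[i] <;> simp

theorem pathHeight_of_length_le {μ : List Bool} {i : ℕ} (h : μ.length ≤ i) :
    pathHeight μ i = northSteps μ := by
  rw [pathHeight, northSteps, List.take_of_length_le h]

theorem pathHeight_le_northSteps (μ : List Bool) (i : ℕ) : pathHeight μ i ≤ northSteps μ :=
  (List.take_sublist _ _).count_le true

theorem pathHeight_le (μ : List Bool) (i : ℕ) : pathHeight μ i ≤ i :=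
  List.count_le_length.trans (by simp)

theorem exists_pathHeight_eq (μ : List Bool) {k : ℕ} (hk : k ≤ northSteps μ) :
    ∃ i ≤ μ.length, pathHeight μ i = k := by
  have hex : ∃ i, k ≤ pathHeight μ i := ⟨μ.length, by rwa [pathHeight_of_length_le le_rfl]⟩
  refine ⟨Nat.find hex, Nat.find_min' hex (by rwa [pathHeight_of_length_le le_rfl]),
    le_antisymm ?_ (Nat.find_spec hex)⟩
  rcases hi : Nat.find hex with _ | i
  · simp
  · have := Nat.find_min hex (m := i) (by lia)
    have := pathHeight_succ_le μ i
    lia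

theorem eq_of_pathHeight_eq {μ μ' : List Bool} (hl : μ.length = μ'.length)
    (h : ∀ i ≤ μ.length, pathHeight μ i = pathHeight μ' i) : μ = μ' := by
  refine List.ext_getElem hl fun i hi hi' => ?_
  have key := getD_eq_true_iff_pathHeight_succ hi false
  rw [h i hi.le, h (i + 1) hi, ← getD_eq_true_iff_pathHeight_succ hi' false,
    List.getD_eq_getElem _ _ hi, List.getD_eq_getElem _ _ hi'] at key
  exact Bool.eq_iff_iff.2 key

theorem exists_path_pathHeight_eq {h : ℕ → ℕ} (h_zero : h 0 = 0) (ℓ : ℕ)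
    (h_succ : ∀ i < ℓ, h (i + 1) = h i ∨ h (i + 1) = h i + 1) :
    ∃ μ : List Bool, μ.length = ℓ ∧ ∀ i ≤ ℓ, pathHeight μ i = h i := by
  induction ℓ with
  | zero => exact ⟨[], rfl, by simp [h_zero]⟩
  | succ ℓ ih =>
    obtain ⟨μ, rfl, hμ⟩ := ih fun i hi => h_succ i (by lia)
    refine ⟨μ ++ [decide (h (μ.length + 1) = h μ.length + 1)], by simp, fun i hi => ?_⟩
    rw [pathHeight_append]
    obtain hi | rfl : i ≤ μ.length ∨ i = μ.length + 1 := by lia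
    · rw [hμ i hi, Nat.sub_eq_zero_of_le hi, pathHeight_zero, add_zero]
    · rw [pathHeight_of_length_le (by lia), ← pathHeight_of_length_le le_rfl, hμ _ le_rfl]
      rcases h_succ μ.length (by lia) with h_eq | h_eq <;> simp [pathHeight, h_eq]

theorem eastSteps_add_northSteps (μ : List Bool) : eastSteps μ + northSteps μ = μ.length :=
  List.count_false_add_count_true μ

theorem pointAt_eq {μ : List Bool} {i : ℕ} (h : i ≤ μ.length) :
    pointAt μ i = (i - pathHeight μ i, pathHeight μ i) := by
  have := List.count_false_add_count_true (μ.take i)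
  rw [List.length_take, min_eq_left h] at this
  exact Prod.ext (by simp only [pointAt, pathHeight]; lia) rfl

theorem heightAt_le_iff (ν : List Bool) (x y : ℕ) :
    heightAt ν x ≤ y ↔ pathHeight ν (x + y) ≤ y := by
  induction ν generalizing x y with
  | nil => cases x <;> simp [heightAt, pathHeight]
  | cons a t ih =>
    rcases x with _ | x
    · simpa [heightAt] using pathHeight_le _ _
    cases a with
    | false =>
      rw [heightAt, ih, show x + 1 + y = x + y + 1 by lia]
      simp [pathHeight]
    | true =>
      rcases y with _ | y
      · simp [heightAt, pathHeight]
      · rw [heightAt, Nat.add_le_add_iff_right, ih, ← add_assoc]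
        simp [pathHeight]

/-! ### The fixed positions and the region above `ν` -/

theorem fpos_le_length (ν : List Bool) (k : ℕ) : fpos ν k ≤ ν.length :=
  csSup_le' fun _ hi => hi.1

theorem pathHeight_fpos {ν : List Bool} {k : ℕ} (hk : k ≤ northSteps ν) :
    pathHeight ν (fpos ν k) = k :=
  (Nat.sSup_mem (s := {i | i ≤ ν.length ∧ pathHeight ν i = k}) (exists_pathHeight_eq ν hk)
    ⟨ν.length, fun _ hi => hi.1⟩).2

theorem le_fpos_iff {ν : List Bool} {i k : ℕ} (hk : k ≤ northSteps ν) (hi : i ≤ ν.length) :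
    i ≤ fpos ν k ↔ pathHeight ν i ≤ k := by
  refine ⟨fun h => (pathHeight_mono ν h).trans_eq (pathHeight_fpos hk), fun h => ?_⟩
  by_contra! hlt
  have hik : pathHeight ν i = k := h.antisymm (by
    simpa [pathHeight_fpos hk] using pathHeight_mono ν hlt.le)
  exact hlt.not_ge (le_csSup ⟨ν.length, fun _ hj => hj.1⟩ ⟨hi, hik⟩)

theorem fpos_lt_fpos {ν : List Bool} {j k : ℕ} (hjk : j < k) (hk : k ≤ northSteps ν) :
    fpos ν j < fpos ν k := by
  rw [← not_le, le_fpos_iff (hjk.le.trans hk) (fpos_le_length ν k), pathHeight_fpos hk]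
  exact hjk.not_ge

theorem fpos_mono {ν : List Bool} {j k : ℕ} (hjk : j ≤ k) (hk : k ≤ northSteps ν) :
    fpos ν j ≤ fpos ν k := by
  rcases hjk.eq_or_lt with rfl | hlt
  exacts [le_rfl, (fpos_lt_fpos hlt hk).le]

theorem fpos_northSteps (ν : List Bool) : fpos ν (northSteps ν) = ν.length :=
  (fpos_le_length ν _).antisymm
    ((le_fpos_iff le_rfl le_rfl).2 (pathHeight_le_northSteps ν _))

theorem mem_APts_iff {ν : List Bool} {x y : ℕ} :
    (x, y) ∈ APts ν ↔ y ≤ northSteps ν ∧ x + y ≤ fpos ν y := by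
  have hE := eastSteps_add_northSteps ν
  simp only [APts, Set.mem_ofPred_eq, heightAt_le_iff]
  constructor
  · rintro ⟨hx, hxy, hy⟩
    exact ⟨hy, (le_fpos_iff hy (by lia)).2 hxy⟩
  · rintro ⟨hy, hxy⟩
    have hf := fpos_le_length ν y
    have hx : (pointAt ν (fpos ν y)).1 ≤ eastSteps ν := (List.take_sublist _ _).count_le false
    rw [pointAt_eq hf, pathHeight_fpos hy] at hx
    exact ⟨by lia, (le_fpos_iff hy (by lia)).1 hxy, hy⟩

theorem horiz_eq {ν : List Bool} {x y : ℕ} (h : (x, y) ∈ APts ν) :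
    horiz ν (x, y) = fpos ν y - (x + y) := by
  rw [mem_APts_iff] at h
  have hset : {k | (x + k, y) ∈ APts ν} = Set.Iic (fpos ν y - (x + y)) := by
    ext k
    simp only [Set.mem_ofPred_eq, mem_APts_iff, Set.mem_Iic]
    lia
  simp only [horiz, hset, csSup_Iic]

theorem isNuPath_iff {ν μ : List Bool} :
    IsNuPath ν μ ↔ μ.length = ν.length ∧ northSteps μ = northSteps ν ∧
      ∀ i ≤ ν.length, i ≤ fpos ν (pathHeight μ i) := by
  have hν := eastSteps_add_northSteps ν
  have hμ := eastSteps_add_northSteps μ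
  have mem_iff (hn : northSteps μ = northSteps ν) {i : ℕ} (hi : i ≤ μ.length) :
      pointAt μ i ∈ APts ν ↔ i ≤ fpos ν (pathHeight μ i) := by
    rw [pointAt_eq hi, mem_APts_iff, Nat.sub_add_cancel (pathHeight_le μ i), ← hn,
      and_iff_right (pathHeight_le_northSteps μ i)]
  constructor
  · rintro ⟨he, hn, hA⟩
    exact ⟨by lia, hn, fun i hi => (mem_iff hn (by lia)).1 (hA i (by lia))⟩
  · rintro ⟨hl, hn, hf⟩
    exact ⟨by lia, hn, fun i hi => (mem_iff hn hi).2 (hf i (by lia))⟩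

theorem IsNuPath.length_eq {ν μ : List Bool} (h : IsNuPath ν μ) : μ.length = ν.length :=
  (isNuPath_iff.1 h).1

theorem IsNuPath.northSteps_eq {ν μ : List Bool} (h : IsNuPath ν μ) :
    northSteps μ = northSteps ν := h.2.1

theorem IsNuPath.le_fpos {ν μ : List Bool} (h : IsNuPath ν μ) {i : ℕ} (hi : i ≤ ν.length) :
    i ≤ fpos ν (pathHeight μ i) := (isNuPath_iff.1 h).2.2 i hi

theorem IsNuPath.horiz_pointAt {ν μ : List Bool} (h : IsNuPath ν μ) {i : ℕ} (hi : i ≤ ν.length) :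
    horiz ν (pointAt μ i) = fpos ν (pathHeight μ i) - i := by
  have hl := h.length_eq
  have hA := h.2.2 i (by lia)
  rw [pointAt_eq (by lia)] at hA ⊢
  rw [horiz_eq hA, Nat.sub_add_cancel (pathHeight_le μ i)]

/-! ### Row contents -/

/-- The number of positions `i ≤ ℓ` at which `g` takes a value less than `k`. -/
def countBelow (ℓ : ℕ) (g : ℕ → ℕ) (k : ℕ) : ℕ := ((Finset.range (ℓ + 1)).filter (g · < k)).card

@[simp]
theorem countBelow_zero (ℓ : ℕ) (g : ℕ → ℕ) : countBelow ℓ g 0 = 0 := by simp [countBelow]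

theorem countBelow_le (ℓ : ℕ) (g : ℕ → ℕ) (k : ℕ) : countBelow ℓ g k ≤ ℓ + 1 :=
  (Finset.card_filter_le _ _).trans_eq (Finset.card_range _)

theorem countBelow_succ (ℓ : ℕ) (g : ℕ → ℕ) (k : ℕ) :
    countBelow ℓ g (k + 1) =
      countBelow ℓ g k + ((Finset.range (ℓ + 1)).filter (g · = k)).card := by
  rw [countBelow, countBelow, ← Finset.card_union_of_disjoint]
  · congr 1
    ext i
    simp only [Finset.mem_filter, Finset.mem_union]
    lia
  · exact Finset.disjoint_filter.2 fun i _ hlt heq => hlt.ne heq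

theorem countBelow_eq_of_forall_lt {ℓ k : ℕ} {g : ℕ → ℕ} (h : ∀ i ≤ ℓ, g i < k) :
    countBelow ℓ g k = ℓ + 1 := by
  rw [countBelow, Finset.filter_true_of_mem fun i hi => h i (by simpa [Nat.lt_succ_iff] using hi),
    Finset.card_range]

theorem countBelow_congr {ℓ : ℕ} {g g' : ℕ → ℕ} (h : ∀ i ≤ ℓ, g i = g' i) :
    countBelow ℓ g = countBelow ℓ g' := by
  funext k
  refine congrArg Finset.card (Finset.filter_congr fun i hi => ?_)
  rw [h i (Finset.mem_range_succ_iff.1 hi)]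

theorem countBelow_eq {ℓ k x : ℕ} {g : ℕ → ℕ} (hx : x ≤ ℓ + 1) (h : ∀ i ≤ ℓ, g i < k ↔ i < x) :
    countBelow ℓ g k = x := by
  rw [countBelow, ← Finset.card_range x]
  congr 1
  ext i
  simp only [Finset.mem_filter, Finset.mem_range]
  exact ⟨fun hi => (h i (by lia)).1 hi.2, fun hi => ⟨by lia, (h i (by lia)).2 hi⟩⟩

theorem lt_countBelow_iff {ℓ i : ℕ} {g : ℕ → ℕ} (hg : Monotone g) (hi : i ≤ ℓ) (k : ℕ) :
    i < countBelow ℓ g k ↔ g i < k := by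
  obtain ⟨x, hx, h⟩ : ∃ x ≤ ℓ + 1, ∀ j ≤ ℓ, g j < k ↔ j < x := by
    by_cases hex : ∃ j, j ≤ ℓ ∧ k ≤ g j
    · refine ⟨Nat.find hex, by have := (Nat.find_spec hex).1; lia, fun j hj => ?_⟩
      rw [← not_le, ← not_le]
      exact not_congr ⟨fun h => Nat.find_min' hex ⟨hj, h⟩,
        fun h => (Nat.find_spec hex).2.trans (hg h)⟩
    · push Not at hex
      exact ⟨ℓ + 1, le_rfl, fun j hj => iff_of_true (hex j hj) (by lia)⟩
  rw [countBelow_eq hx h, h i hi]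

/-- The number of lattice points of `μ` lying strictly below height `k`. -/
def pathContent (μ : List Bool) : ℕ → ℕ := countBelow μ.length (pathHeight μ)

theorem lt_pathContent_iff {μ : List Bool} {i : ℕ} (hi : i ≤ μ.length) (k : ℕ) :
    i < pathContent μ k ↔ pathHeight μ i < k :=
  lt_countBelow_iff (pathHeight_mono μ) hi k

theorem pathContent_injective : Function.Injective pathContent := by
  intro μ μ' h
  have length_add_one (μ : List Bool) {K : ℕ} (hK : northSteps μ < K) :
      pathContent μ K = μ.length + 1 :=
    countBelow_eq_of_forall_lt fun i _ => (pathHeight_le_northSteps μ i).trans_lt hK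
  have hl : μ.length = μ'.length := by
    have hμ := length_add_one μ (K := northSteps μ + northSteps μ' + 1) (by lia)
    have hμ' := length_add_one μ' (K := northSteps μ + northSteps μ' + 1) (by lia)
    rw [h] at hμ
    lia
  refine eq_of_pathHeight_eq hl fun i hi => eq_of_forall_lt_iff fun k => ?_
  rw [← not_le, ← not_le, ← Nat.lt_succ_iff, ← Nat.lt_succ_iff, ← lt_pathContent_iff hi, h,
    lt_pathContent_iff (hl ▸ hi)]

/-- The functions `c` which occur as `pathContent μ` for a `ν`-path `μ`, or equivalently as
`countBelow` of a `ν`-bracket vector: `c k` entries are less than `k`. -/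
structure IsContent (ν : List Bool) (c : ℕ → ℕ) : Prop where
  zero : c 0 = 0
  lt_succ : ∀ {k}, k ≤ northSteps ν → c k < c (k + 1)
  le_fpos_succ : ∀ {k}, k ≤ northSteps ν → c (k + 1) ≤ fpos ν k + 1
  last : ∀ {k}, northSteps ν < k → c k = ν.length + 1

theorem IsContent.lt {ν : List Bool} {c : ℕ → ℕ} (hc : IsContent ν c) {j k : ℕ} (hjk : j < k)
    (hk : k ≤ northSteps ν + 1) : c j < c k := by
  induction k, Nat.succ_le_of_lt hjk using Nat.le_induction with
  | base => exact hc.lt_succ (by lia)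
  | succ k hjk ih => exact (ih (by lia) (by lia)).trans (hc.lt_succ (by lia))

theorem IsContent.mono {ν : List Bool} {c : ℕ → ℕ} (hc : IsContent ν c) : Monotone c := by
  refine monotone_nat_of_le_succ fun k => ?_
  rcases le_or_gt k (northSteps ν) with hk | hk
  · exact (hc.lt_succ hk).le
  · rw [hc.last hk, hc.last (by lia)]

theorem IsContent.le_length {ν : List Bool} {c : ℕ → ℕ} (hc : IsContent ν c) {k : ℕ}
    (hk : k ≤ northSteps ν) : c k ≤ ν.length := by
  have := hc.lt_succ hk
  have := hc.le_fpos_succ hk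
  have := fpos_le_length ν k
  lia

theorem IsContent.le_length_add_one {ν : List Bool} {c : ℕ → ℕ} (hc : IsContent ν c) (k : ℕ) :
    c k ≤ ν.length + 1 := by
  rcases le_or_gt k (northSteps ν) with hk | hk
  · exact (hc.le_length hk).trans (Nat.le_succ _)
  · exact (hc.last hk).le

theorem IsNuPath.isContent {ν μ : List Bool} (h : IsNuPath ν μ) : IsContent ν (pathContent μ) where
  zero := countBelow_zero _ _
  lt_succ {k} hk := by
    obtain ⟨i, hi, rfl⟩ := exists_pathHeight_eq μ (h.northSteps_eq ▸ hk)
    have := lt_pathContent_iff hi (pathHeight μ i)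
    have := lt_pathContent_iff hi (pathHeight μ i + 1)
    lia
  le_fpos_succ {k} hk := by
    by_contra! hlt
    have hle : pathContent μ (k + 1) ≤ μ.length + 1 := countBelow_le _ _ _
    have hl := h.length_eq
    have hi := (lt_pathContent_iff (i := fpos ν k + 1) (by lia) (k + 1)).1 hlt
    have := h.le_fpos (i := fpos ν k + 1) (by lia)
    have := fpos_mono (Nat.lt_succ_iff.1 hi) hk
    lia
  last {k} hk := by
    rw [← h.length_eq]
    exact countBelow_eq_of_forall_lt fun i _ =>
      (pathHeight_le_northSteps μ i).trans_lt (h.northSteps_eq ▸ hk)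

theorem IsContent.exists_height {ν : List Bool} {c : ℕ → ℕ} (hc : IsContent ν c) :
    ∃ h : ℕ → ℕ, (∀ i, h i ≤ northSteps ν) ∧ ∀ {i}, i ≤ ν.length → ∀ k, h i < k ↔ i < c k := by
  refine ⟨fun i => Nat.findGreatest (c · ≤ i) (northSteps ν), fun i => Nat.findGreatest_le _,
    fun {i} hi k => ⟨fun hk => ?_, fun hk => ?_⟩⟩
  · rcases le_or_gt k (northSteps ν) with hkn | hkn
    · exact not_le.1 (Nat.findGreatest_is_greatest (P := (c · ≤ i)) hk hkn)
    · rw [hc.last hkn]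
      lia
  · have h_spec : c (Nat.findGreatest (c · ≤ i) (northSteps ν)) ≤ i :=
      Nat.findGreatest_spec (P := (c · ≤ i)) (Nat.zero_le _) (by simp [hc.zero])
    exact not_le.1 fun hle => (h_spec.trans_lt hk).not_ge (hc.mono hle)

theorem IsContent.exists_isNuPath {ν : List Bool} {c : ℕ → ℕ} (hc : IsContent ν c) :
    ∃ μ, IsNuPath ν μ ∧ pathContent μ = c := by
  obtain ⟨h, h_le, h_lt_iff⟩ := hc.exists_height
  have h_zero : h 0 = 0 := by
    have := (h_lt_iff (Nat.zero_le _) 1).2 (by simpa [hc.zero] using hc.lt_succ (Nat.zero_le _))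
    lia
  have h_succ (i : ℕ) (hi : i < ν.length) : h (i + 1) = h i ∨ h (i + 1) = h i + 1 := by
    have := h_lt_iff hi.le (h i)
    have := h_lt_iff hi (h i)
    have := h_lt_iff hi.le (h i + 1)
    have := h_lt_iff hi (h i + 2)
    have := h_le (i + 1)
    rcases (h_le i).eq_or_lt with hin | hin
    · lia
    · have := hc.lt_succ (k := h i + 1) (by lia)
      lia
  obtain ⟨μ, hl, hμ⟩ := exists_path_pathHeight_eq h_zero ν.length h_succ
  refine ⟨μ, isNuPath_iff.2 ⟨hl, ?_, fun i hi => ?_⟩, funext fun k => ?_⟩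
  · rw [← pathHeight_of_length_le hl.le, hμ _ le_rfl]
    exact (h_le _).antisymm
      (not_lt.1 ((h_lt_iff le_rfl _).not.2 (hc.le_length le_rfl).not_gt))
  · rw [hμ i hi]
    exact Nat.lt_succ_iff.1 (((h_lt_iff hi _).1 (Nat.lt_succ_self _)).trans_le
      (hc.le_fpos_succ (h_le i)))
  · exact countBelow_eq (hl ▸ hc.le_length_add_one k) fun i hi => by
      rw [hμ i (hl ▸ hi), h_lt_iff (hl ▸ hi)]

/-! ### Bracket vectors and row contents -/

/-- A `ν`-bracket vector, read as a function on positions of which only the values at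
`i ≤ ν.length` matter. -/
structure IsBracketFun (ν : List Bool) (b : ℕ → ℕ) : Prop where
  map_fpos : ∀ {k}, k ≤ northSteps ν → b (fpos ν k) = k
  pathHeight_le : ∀ {i}, i ≤ ν.length → pathHeight ν i ≤ b i
  le_northSteps : ∀ {i}, i ≤ ν.length → b i ≤ northSteps ν
  avoids : ∀ {i j m}, i < j → j < m → m ≤ ν.length → b i = b m → b j ≤ b i

theorem isBracketVector_iff {ν : List Bool} {l : List ℕ} :
    IsBracketVector ν l ↔ l.length = ν.length + 1 ∧ IsBracketFun ν (l.getD · 0) := by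
  have bmin_getD {i : ℕ} (hi : i < ν.length + 1) : (bmin ν).getD i 0 = pathHeight ν i := by
    rw [List.getD_eq_getElem _ _ (by simpa [bmin] using hi)]
    simp [bmin, pathHeight]
  constructor
  · rintro ⟨hl, hf, hb, ha⟩
    refine ⟨hl, hf _, fun {i} hi => ?_, fun hi => (hb _ (by lia)).2,
      fun {i j m} hij hjm hm h => not_lt.1 fun hlt => ha i j m hij hjm (by lia) ⟨h, hlt⟩⟩
    rw [← bmin_getD (by lia)]
    exact (hb i (by lia)).1
  · rintro ⟨hl, hb⟩
    refine ⟨hl, fun k => hb.map_fpos, fun i hi => ⟨?_, hb.le_northSteps (by lia)⟩,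
      fun i j m hij hjm hm h => (hb.avoids hij hjm (by lia) h.1).not_gt h.2⟩
    rw [bmin_getD (by lia)]
    exact hb.pathHeight_le (by lia)

theorem IsBracketFun.congr {ν : List Bool} {b b' : ℕ → ℕ} (hb : IsBracketFun ν b)
    (heq : ∀ i ≤ ν.length, b' i = b i) : IsBracketFun ν b' where
  map_fpos {k} hk := by rw [heq _ (fpos_le_length ν k), hb.map_fpos hk]
  pathHeight_le hi := by rw [heq _ hi]; exact hb.pathHeight_le hi
  le_northSteps hi := by rw [heq _ hi]; exact hb.le_northSteps hi
  avoids hij hjm hm := by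
    rw [heq _ (hij.le.trans (hjm.le.trans hm)), heq _ (hjm.le.trans hm), heq _ hm]
    exact hb.avoids hij hjm hm

theorem IsBracketFun.le_fpos {ν : List Bool} {b : ℕ → ℕ} (hb : IsBracketFun ν b) {i : ℕ}
    (hi : i ≤ ν.length) : i ≤ fpos ν (b i) :=
  (le_fpos_iff (hb.le_northSteps hi) hi).2 (hb.pathHeight_le hi)

theorem IsBracketFun.le_of_le_fpos {ν : List Bool} {b : ℕ → ℕ} (hb : IsBracketFun ν b) {i j : ℕ}
    (hij : i < j) (hj : j ≤ fpos ν (b i)) : b j ≤ b i := by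
  have hf := fpos_le_length ν (b i)
  have hi : b (fpos ν (b i)) = b i := hb.map_fpos (hb.le_northSteps (by lia))
  rcases hj.eq_or_lt with rfl | hlt
  exacts [hi.le, hb.avoids hij hlt hf hi.symm]

theorem IsBracketFun.isContent {ν : List Bool} {b : ℕ → ℕ} (hb : IsBracketFun ν b) :
    IsContent ν (countBelow ν.length b) where
  zero := countBelow_zero _ _
  lt_succ {k} hk := by
    rw [countBelow_succ, Nat.lt_add_right_iff_pos, Finset.card_pos]
    exact ⟨fpos ν k, by simpa [hb.map_fpos hk, Nat.lt_succ_iff] using fpos_le_length ν k⟩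
  le_fpos_succ {k} hk := by
    rw [countBelow, ← Finset.card_range (fpos ν k + 1)]
    refine Finset.card_le_card fun i hi => ?_
    simp only [Finset.mem_filter, Finset.mem_range, Nat.lt_succ_iff] at hi ⊢
    exact (hb.le_fpos hi.1).trans (fpos_mono hi.2 hk)
  last hk := countBelow_eq_of_forall_lt fun _ hi => (hb.le_northSteps hi).trans_lt hk

/-- The number of positions `i ≤ f_k` of a bracket vector with content `c` whose entry exceeds `k`,
i.e. which are still unassigned once the values `0, …, k` have been placed. -/
noncomputable def stackSize (ν : List Bool) (c : ℕ → ℕ) (k : ℕ) : ℕ := fpos ν k + 1 - c (k + 1)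

/-- The number of unassigned positions before `i` when the values less than `pathHeight ν i` have
been placed. -/
def depth (ν : List Bool) (c : ℕ → ℕ) (i : ℕ) : ℕ := i - c (pathHeight ν i)

/-- The bracket vector with content `c`. The unassigned positions `i ≤ f_k` form a stack of size
`stackSize ν c k`; position `i` is pushed at depth `depth ν c i` and receives the first value
after which the stack has shrunk to that depth. -/
noncomputable def bracketOfContent (ν : List Bool) (c : ℕ → ℕ) (i : ℕ) : ℕ :=
  sInf {k | pathHeight ν i ≤ k ∧ stackSize ν c k ≤ depth ν c i}

theorem IsContent.stackSize_northSteps {ν : List Bool} {c : ℕ → ℕ} (hc : IsContent ν c) :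
    stackSize ν c (northSteps ν) = 0 := by
  rw [stackSize, hc.last (Nat.lt_succ_self _), fpos_northSteps, Nat.sub_self]

theorem IsContent.bracketOfContent_mem {ν : List Bool} {c : ℕ → ℕ} (hc : IsContent ν c) (i : ℕ) :
    pathHeight ν i ≤ bracketOfContent ν c i ∧
      stackSize ν c (bracketOfContent ν c i) ≤ depth ν c i :=
  Nat.sInf_mem (s := {k | pathHeight ν i ≤ k ∧ stackSize ν c k ≤ depth ν c i})
    ⟨northSteps ν, pathHeight_le_northSteps ν i, by rw [hc.stackSize_northSteps]; lia⟩

theorem bracketOfContent_le {ν : List Bool} {c : ℕ → ℕ} {i k : ℕ} (hk : pathHeight ν i ≤ k)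
    (h : stackSize ν c k ≤ depth ν c i) : bracketOfContent ν c i ≤ k :=
  Nat.sInf_le ⟨hk, h⟩

theorem IsContent.lt_bracketOfContent_iff {ν : List Bool} {c : ℕ → ℕ} (hc : IsContent ν c)
    {i k : ℕ} : k < bracketOfContent ν c i ↔
      ∀ j, pathHeight ν i ≤ j → j ≤ k → depth ν c i < stackSize ν c j := by
  refine ⟨fun h j hij hjk => ?_, fun h => ?_⟩
  · by_contra! hle
    exact ((bracketOfContent_le hij hle).trans hjk).not_gt h
  · by_contra! hle
    obtain ⟨h_height, h_stack⟩ := hc.bracketOfContent_mem i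
    exact (h _ h_height hle).not_ge h_stack

theorem IsContent.bracketOfContent_eq_iff {ν : List Bool} {c : ℕ → ℕ} (hc : IsContent ν c)
    {i k : ℕ} : bracketOfContent ν c i = k ↔ pathHeight ν i ≤ k ∧ stackSize ν c k ≤ depth ν c i ∧
      ∀ j, pathHeight ν i ≤ j → j < k → depth ν c i < stackSize ν c j := by
  constructor
  · rintro rfl
    obtain ⟨h_height, h_stack⟩ := hc.bracketOfContent_mem i
    exact ⟨h_height, h_stack, fun j hij hjk => hc.lt_bracketOfContent_iff.1 hjk j hij le_rfl⟩
  · rintro ⟨h_height, h_stack, h_lt⟩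
    refine (bracketOfContent_le h_height h_stack).antisymm (not_lt.1 fun hlt => ?_)
    obtain ⟨h_height', h_stack'⟩ := hc.bracketOfContent_mem i
    exact (h_lt _ h_height' hlt).not_ge h_stack'

theorem IsContent.apply_pathHeight_le {ν : List Bool} {c : ℕ → ℕ} (hc : IsContent ν c) {i : ℕ}
    (hi : i ≤ ν.length) : c (pathHeight ν i) ≤ i := by
  rcases h : pathHeight ν i with _ | l
  · simp [hc.zero]
  · have hl : l ≤ northSteps ν := by have := pathHeight_le_northSteps ν i; lia
    have := hc.le_fpos_succ hl
    have := le_fpos_iff hl hi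
    lia

theorem stackSize_le_depth {ν : List Bool} {c : ℕ → ℕ} {i l : ℕ} (hi : i ≤ ν.length)
    (h : pathHeight ν i = l + 1) : stackSize ν c l ≤ depth ν c i := by
  have hl : l ≤ northSteps ν := by have := pathHeight_le_northSteps ν i; lia
  have := le_fpos_iff hl hi
  simp only [stackSize, depth, h]
  lia

theorem IsContent.depth_lt_depth {ν : List Bool} {c : ℕ → ℕ} (hc : IsContent ν c) {i j : ℕ}
    (hij : i < j) (hj : j ≤ ν.length) (h : pathHeight ν j ≤ bracketOfContent ν c i) :
    depth ν c i < depth ν c j := by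
  rcases (pathHeight_mono ν hij.le).eq_or_lt with heq | hlt
  · have := hc.apply_pathHeight_le (hij.le.trans hj)
    simp only [depth, ← heq]
    lia
  · obtain ⟨l, hl⟩ : ∃ l, pathHeight ν j = l + 1 := ⟨pathHeight ν j - 1, by lia⟩
    exact (hc.lt_bracketOfContent_iff.1 (by lia) l (by lia) le_rfl).trans_le
      (stackSize_le_depth hj hl)

theorem IsContent.isBracketFun_bracketOfContent {ν : List Bool} {c : ℕ → ℕ}
    (hc : IsContent ν c) : IsBracketFun ν (bracketOfContent ν c) where
  map_fpos {k} hk := by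
    refine le_antisymm (bracketOfContent_le (pathHeight_fpos hk).le ?_) ?_
    · have := hc.lt_succ hk
      rw [stackSize, depth, pathHeight_fpos hk]
      lia
    · simpa [pathHeight_fpos hk] using (hc.bracketOfContent_mem (fpos ν k)).1
  pathHeight_le _ := (hc.bracketOfContent_mem _).1
  le_northSteps {i} _ := bracketOfContent_le (pathHeight_le_northSteps ν i) (by
    rw [hc.stackSize_northSteps]
    exact Nat.zero_le _)
  avoids {i j m} hij hjm hm heq := by
    by_contra! hlt
    have hjm' := (pathHeight_mono ν hjm.le).trans (hc.bracketOfContent_mem m).1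
    rw [← heq] at hjm'
    have h_depth := hc.lt_bracketOfContent_iff.1 hlt _ hjm' le_rfl
    exact ((hc.depth_lt_depth hij (by lia) hjm').trans h_depth).not_ge (hc.bracketOfContent_mem i).2

/-- The positions `i ≤ f_k` at which `b` exceeds `k`. -/
noncomputable def largerBefore (ν : List Bool) (b : ℕ → ℕ) (k : ℕ) : Finset ℕ :=
  (Finset.range (fpos ν k + 1)).filter (k < b ·)

theorem mem_largerBefore {ν : List Bool} {b : ℕ → ℕ} {i k : ℕ} :
    i ∈ largerBefore ν b k ↔ i ≤ fpos ν k ∧ k < b i := by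
  simp [largerBefore]

theorem IsBracketFun.card_largerBefore {ν : List Bool} {b : ℕ → ℕ} (hb : IsBracketFun ν b) {k : ℕ}
    (hk : k ≤ northSteps ν) :
    (largerBefore ν b k).card = stackSize ν (countBelow ν.length b) k := by
  have h_small : (Finset.range (ν.length + 1)).filter (b · < k + 1) =
      (Finset.range (fpos ν k + 1)).filter (¬ k < b ·) := by
    ext i
    simp only [Finset.mem_filter, Finset.mem_range, not_lt, Nat.lt_succ_iff]
    refine and_congr_left fun hi => ⟨fun h => (hb.le_fpos h).trans (fpos_mono hi hk),
      fun h => h.trans (fpos_le_length ν k)⟩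
  have h_add := Finset.card_filter_add_card_filter_not (s := Finset.range (fpos ν k + 1)) (k < b ·)
  rw [← h_small, Finset.card_range] at h_add
  simp only [largerBefore, stackSize, countBelow]
  lia

theorem IsContent.exists_depth_eq {ν : List Bool} {c : ℕ → ℕ} (hc : IsContent ν c) {k d : ℕ}
    (hk : k ≤ northSteps ν) (hd : d < stackSize ν c k) :
    ∃ i ∈ largerBefore ν (bracketOfContent ν c) k, depth ν c i = d := by
  have exists_of_pathHeight_eq {k : ℕ} (hk : k ≤ northSteps ν) (hd : d < stackSize ν c k)
      (hi : k ≤ pathHeight ν (d + c k)) :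
      ∃ i ∈ largerBefore ν (bracketOfContent ν c) k, depth ν c i = d := by
    have := hc.lt_succ hk
    have hf := fpos_le_length ν k
    have hfi : d + c k ≤ fpos ν k := by rw [stackSize] at hd; lia
    have hik := ((le_fpos_iff hk (hfi.trans hf)).1 hfi).antisymm hi
    have h_depth : depth ν c (d + c k) = d := by rw [depth, hik, Nat.add_sub_cancel]
    refine ⟨d + c k, mem_largerBefore.2 ⟨hfi, hc.lt_bracketOfContent_iff.2 fun j hj hjk => ?_⟩,
      h_depth⟩
    rwa [h_depth, hjk.antisymm (hik ▸ hj)]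
  induction k with
  | zero => exact exists_of_pathHeight_eq hk hd (Nat.zero_le _)
  | succ l ih =>
    rcases lt_or_ge d (stackSize ν c l) with hdl | hdl
    · obtain ⟨i, hi, h_depth⟩ := ih (by lia) hdl
      rw [mem_largerBefore, hc.lt_bracketOfContent_iff] at hi
      refine ⟨i, mem_largerBefore.2 ⟨hi.1.trans (fpos_mono (by lia) hk),
        hc.lt_bracketOfContent_iff.2 fun j hij hj => ?_⟩, h_depth⟩
      rcases Nat.le_succ_iff.1 hj with hj | rfl
      exacts [hi.2 j hij hj, h_depth ▸ hd]
    · refine exists_of_pathHeight_eq hk hd ?_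
      have hf := fpos_le_length ν (l + 1)
      have := hc.lt_succ hk
      rw [stackSize] at hd hdl
      have := le_fpos_iff (ν := ν) (k := l) (i := d + c (l + 1)) (by lia) (by lia)
      lia

theorem IsContent.card_largerBefore_bracketOfContent {ν : List Bool} {c : ℕ → ℕ}
    (hc : IsContent ν c) {k : ℕ} (hk : k ≤ northSteps ν) :
    (largerBefore ν (bracketOfContent ν c) k).card = stackSize ν c k := by
  rw [← Finset.card_range (stackSize ν c k)]
  refine Finset.card_nbij (depth ν c) (fun i hi => ?_) (StrictMonoOn.injOn fun i hi j hj hij => ?_)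
    fun d hd => hc.exists_depth_eq hk (Finset.mem_range.1 hd)
  · rw [Finset.mem_coe, mem_largerBefore] at hi
    have hik := (le_fpos_iff hk (hi.1.trans (fpos_le_length ν k))).1 hi.1
    exact Finset.mem_coe.2 <| Finset.mem_range.2 (hc.lt_bracketOfContent_iff.1 hi.2 k hik le_rfl)
  · rw [Finset.mem_coe, mem_largerBefore] at hi hj
    have hjl := hj.1.trans (fpos_le_length ν k)
    exact hc.depth_lt_depth hij hjl (((le_fpos_iff hk hjl).1 hj.1).trans hi.2.le)

theorem IsContent.countBelow_bracketOfContent {ν : List Bool} {c : ℕ → ℕ} (hc : IsContent ν c) :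
    countBelow ν.length (bracketOfContent ν c) = c := by
  have hb := hc.isBracketFun_bracketOfContent
  funext k
  rcases k with _ | k
  · rw [countBelow_zero, hc.zero]
  rcases le_or_gt k (northSteps ν) with hk | hk
  · have h := (hb.card_largerBefore hk).symm.trans (hc.card_largerBefore_bracketOfContent hk)
    have := hb.isContent.le_fpos_succ hk
    have := hc.le_fpos_succ hk
    simp only [stackSize] at h
    lia
  · rw [hb.isContent.last (by lia), hc.last (by lia)]

theorem IsBracketFun.depth_eq_card {ν : List Bool} {b : ℕ → ℕ} (hb : IsBracketFun ν b) {i : ℕ}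
    (hi : i ≤ ν.length) : depth ν (countBelow ν.length b) i =
      ((Finset.range i).filter (pathHeight ν i ≤ b ·)).card := by
  have h_small : (Finset.range (ν.length + 1)).filter (b · < pathHeight ν i) =
      (Finset.range i).filter (¬ pathHeight ν i ≤ b ·) := by
    ext j
    simp only [Finset.mem_filter, Finset.mem_range, not_le]
    refine and_congr_left fun hj => ⟨fun h => ?_, fun h => by lia⟩
    by_contra! hij
    exact ((pathHeight_mono ν hij).trans (hb.pathHeight_le (Nat.lt_succ_iff.1 h))).not_gt hj
  have h_add := Finset.card_filter_add_card_filter_not (s := Finset.range i) (pathHeight ν i ≤ b ·)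
  rw [← h_small, Finset.card_range] at h_add
  simp only [depth, countBelow]
  lia

theorem IsBracketFun.eq_bracketOfContent {ν : List Bool} {b : ℕ → ℕ} (hb : IsBracketFun ν b)
    {i : ℕ} (hi : i ≤ ν.length) : b i = bracketOfContent ν (countBelow ν.length b) i := by
  have hin := hb.le_northSteps hi
  refine le_antisymm (le_of_forall_lt fun k hk => hb.isContent.lt_bracketOfContent_iff.2
    fun j hij hjk => ?_) (bracketOfContent_le (hb.pathHeight_le hi) ?_)
  · have hif : i ≤ fpos ν j := (le_fpos_iff (by lia) hi).2 hij
    rw [← hb.card_largerBefore (by lia), hb.depth_eq_card hi, ← Nat.succ_le_iff,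
      Nat.succ_eq_add_one, ← Finset.card_insert_of_notMem (a := i) (by simp)]
    refine Finset.card_le_card fun m hm => mem_largerBefore.2 ?_
    simp only [Finset.mem_insert, Finset.mem_filter, Finset.mem_range] at hm
    obtain rfl | ⟨hmi, hm⟩ := hm
    · exact ⟨hif, by lia⟩
    · have := hb.le_of_le_fpos hmi ((le_fpos_iff (hb.le_northSteps (by lia)) hi).2 hm)
      lia
  · rw [← hb.card_largerBefore hin, hb.depth_eq_card hi]
    refine Finset.card_le_card fun m hm => ?_
    rw [mem_largerBefore] at hm
    have := hb.pathHeight_le hi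
    rw [Finset.mem_filter, Finset.mem_range]
    refine ⟨?_, by lia⟩
    by_contra! him
    rcases him.eq_or_lt with rfl | hlt
    exacts [lt_irrefl _ hm.2, (hb.le_of_le_fpos hlt hm.1).not_gt hm.2]

/-! ### The greedy assignment -/

theorem take_countP_reverse {α : Type*} {p : α → Bool} {L : List α}
    (h : L.Pairwise fun a a' => p a → p a') :
    L.reverse.take (L.countP p) = (L.filter p).reverse := by
  induction L with
  | nil => rfl
  | cons a L ih =>
    rw [List.pairwise_cons] at h
    by_cases ha : p a
    · have h_all : ∀ x ∈ a :: L, p x := List.forall_mem_cons.2 ⟨ha, fun x hx => h.1 x hx ha⟩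
      rw [List.countP_eq_length.2 h_all, List.filter_eq_self.2 h_all, ← List.length_reverse,
        List.take_length]
    · rw [List.countP_cons_of_neg ha, List.filter_cons_of_neg ha, List.reverse_cons,
        List.take_append_of_le_length (by simpa using List.countP_le_length), ih h.2]

theorem lookup_eq_some_of_mem {α β : Type*} [BEq α] [LawfulBEq α] {L : List (α × β)} {a : α} {v : β}
    (hmem : (a, v) ∈ L) (hunique : ∀ w, (a, w) ∈ L → w = v) : L.lookup a = some v := by
  induction L with
  | nil => simp at hmem
  | cons x L ih =>
    obtain ⟨a', w⟩ := x
    by_cases ha : a = a'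
    · subst ha
      rw [List.lookup_cons_self, hunique w List.mem_cons_self]
    · rw [List.lookup_cons, beq_false_of_ne ha]
      exact ih (by simpa [ha] using hmem) fun w' hw' => hunique w' (List.mem_cons_of_mem _ hw')

/-- One round of the greedy assignment defining `bracketAssign`: `st` holds the assigned pairs and
the unassigned positions, and `k` is the value being placed. -/
noncomputable def greedyStep (ν μ : List Bool) (st : List (ℕ × ℕ) × List ℕ) (k : ℕ) :
    List (ℕ × ℕ) × List ℕ :=
  let picked := ((st.2.filter fun i => decide (i ≤ fpos ν k)).reverse).take (pointsAtHeight μ k)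
  (st.1 ++ picked.map fun i => (i, k), st.2.filter fun i => decide (i ∉ picked))

/-- The state of the greedy assignment once the values less than `K` have been placed. -/
noncomputable def greedyState (ν μ : List Bool) (K : ℕ) : List (ℕ × ℕ) × List ℕ :=
  (List.range K).foldl (greedyStep ν μ) ([], List.range (ν.length + 1))

theorem bracketAssign_eq (ν μ : List Bool) :
    bracketAssign ν μ = (greedyState ν μ (northSteps ν + 1)).1 := rfl

theorem greedyState_succ (ν μ : List Bool) (K : ℕ) :
    greedyState ν μ (K + 1) = greedyStep ν μ (greedyState ν μ K) K := by
  simp [greedyState, List.range_succ]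

theorem pointsAtHeight_eq_of_countBelow_eq {ν μ : List Bool} {b : ℕ → ℕ}
    (h : countBelow ν.length b = pathContent μ) (k : ℕ) :
    pointsAtHeight μ k = (List.range (ν.length + 1)).countP (b · = k) := by
  have hb := countBelow_succ ν.length b k
  rw [h, pathContent, countBelow_succ, add_right_inj] at hb
  rw [List.countP_eq_length_filter]
  exact hb

theorem IsBracketFun.mem_picked_iff {ν μ : List Bool} {b : ℕ → ℕ} (hb : IsBracketFun ν b)
    (h : countBelow ν.length b = pathContent μ) {k : ℕ} (hk : k ≤ northSteps ν) {i : ℕ} :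
    i ∈ ((((List.range (ν.length + 1)).filter (k ≤ b ·)).filter (· ≤ fpos ν k)).reverse).take
      (pointsAtHeight μ k) ↔ i ≤ ν.length ∧ b i = k := by
  set L := ((List.range (ν.length + 1)).filter (k ≤ b ·)).filter (· ≤ fpos ν k) with hL
  have h_pairwise : L.Pairwise fun i j => decide (b i = k) → decide (b j = k) := by
    refine ((List.pairwise_lt_range.filter _).filter _).imp_of_mem fun {i j} _ hj hij hi => ?_
    simp only [hL, List.mem_filter, decide_eq_true_eq] at hi hj ⊢
    subst hi
    exact (hb.le_of_le_fpos hij hj.2).antisymm hj.1.2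
  have h_mem {i : ℕ} (hi : i ≤ ν.length) (hik : b i = k) : i ≤ fpos ν k := hik ▸ hb.le_fpos hi
  have h_count : pointsAtHeight μ k = L.countP (b · = k) := by
    rw [pointsAtHeight_eq_of_countBelow_eq h, hL, List.countP_filter, List.countP_filter]
    refine List.countP_congr fun i hi => ?_
    have := @h_mem i (by simpa [Nat.lt_succ_iff] using hi)
    simp only [decide_eq_true_eq, Bool.and_eq_true]
    exact ⟨fun hik => ⟨⟨hik, this hik⟩, hik.ge⟩, fun hik => hik.1.1⟩
  rw [h_count, take_countP_reverse h_pairwise]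
  simp only [hL, List.mem_reverse, List.mem_filter, List.mem_range, decide_eq_true_eq,
    Nat.lt_succ_iff]
  exact ⟨fun hi => ⟨hi.1.1.1, hi.2⟩, fun hi => ⟨⟨⟨hi.1, hi.2.ge⟩, h_mem hi.1 hi.2⟩, hi.2⟩⟩

theorem IsBracketFun.greedyState_spec {ν μ : List Bool} {b : ℕ → ℕ} (hb : IsBracketFun ν b)
    (h : countBelow ν.length b = pathContent μ) {K : ℕ} (hK : K ≤ northSteps ν + 1) :
    (∀ i v, (i, v) ∈ (greedyState ν μ K).1 ↔ i ≤ ν.length ∧ b i = v ∧ v < K) ∧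
      (greedyState ν μ K).2 = (List.range (ν.length + 1)).filter (K ≤ b ·) := by
  induction K with
  | zero => simp [greedyState]
  | succ k ih =>
    obtain ⟨ih_mem, ih_rest⟩ := ih (by lia)
    have h_picked {i : ℕ} := hb.mem_picked_iff h (i := i) (Nat.le_of_succ_le_succ hK)
    simp only [greedyState_succ, greedyStep, ih_rest]
    refine ⟨fun i v => ?_, ?_⟩
    · simp only [List.mem_append, ih_mem, List.mem_map, h_picked, Prod.mk.injEq]
      constructor
      · rintro (h | ⟨_, h, rfl, rfl⟩) <;> lia
      · intro h
        rcases (Nat.lt_succ_iff.1 h.2.2).lt_or_eq with hv | hv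
        · exact .inl ⟨h.1, h.2.1, hv⟩
        · exact .inr ⟨i, ⟨h.1, h.2.1.trans hv⟩, rfl, hv.symm⟩
    · rw [List.filter_filter]
      refine List.filter_congr fun i hi => ?_
      rw [List.mem_range, Nat.lt_succ_iff] at hi
      simp only [h_picked, hi, true_and, ← Bool.decide_and, decide_eq_decide]
      lia

/-- The bracket vector of a `ν`-path as a function on positions. -/
noncomputable def bracketFun (ν μ : List Bool) : ℕ → ℕ := bracketOfContent ν (pathContent μ)

theorem IsNuPath.isBracketFun {ν μ : List Bool} (h : IsNuPath ν μ) :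
    IsBracketFun ν (bracketFun ν μ) :=
  h.isContent.isBracketFun_bracketOfContent

theorem IsNuPath.countBelow_bracketFun {ν μ : List Bool} (h : IsNuPath ν μ) :
    countBelow ν.length (bracketFun ν μ) = pathContent μ :=
  h.isContent.countBelow_bracketOfContent

theorem IsNuPath.bracketOfPath_eq {ν μ : List Bool} (h : IsNuPath ν μ) :
    bracketOfPath ν μ = (List.range (ν.length + 1)).map (bracketFun ν μ) := by
  have h_mem := (h.isBracketFun.greedyState_spec h.countBelow_bracketFun le_rfl).1
  refine List.map_congr_left fun i hi => ?_
  rw [List.mem_range, Nat.lt_succ_iff] at hi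
  rw [bracketAssign_eq, lookup_eq_some_of_mem ((h_mem i _).2
    ⟨hi, rfl, Nat.lt_succ_of_le (h.isBracketFun.le_northSteps hi)⟩)
    fun w hw => ((h_mem i w).1 hw).2.1.symm, Option.getD_some]

/-! ### Raising an entry of a bracket vector -/

/-- The position `s` is the first occurrence of the value `k` in `b`, but not the last one. -/
structure IsRaisable (ν : List Bool) (b : ℕ → ℕ) (k s : ℕ) : Prop where
  apply_eq : b s = k
  lt_fpos : s < fpos ν k
  apply_ne : ∀ i < s, b i ≠ k

theorem IsRaisable.le_length {ν : List Bool} {b : ℕ → ℕ} {k s : ℕ} (hs : IsRaisable ν b k s) :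
    s ≤ ν.length :=
  hs.lt_fpos.le.trans (fpos_le_length ν k)

theorem IsBracketFun.exists_isRaisable_iff {ν : List Bool} {b : ℕ → ℕ} (hb : IsBracketFun ν b)
    {k : ℕ} (hk : k ≤ northSteps ν) : (∃ s, IsRaisable ν b k s) ↔
      countBelow ν.length b k + 2 ≤ countBelow ν.length b (k + 1) := by
  have h_mem {i : ℕ} : i ∈ (Finset.range (ν.length + 1)).filter (b · = k) ↔
      i ≤ ν.length ∧ b i = k := by simp
  have hf := fpos_le_length ν k
  rw [countBelow_succ, Nat.add_le_add_iff_left, ← Nat.lt_iff_add_one_le, Finset.one_lt_card_iff]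
  constructor
  · rintro ⟨s, hs⟩
    exact ⟨s, fpos ν k, h_mem.2 ⟨hs.le_length, hs.apply_eq⟩, h_mem.2 ⟨hf, hb.map_fpos hk⟩,
      hs.lt_fpos.ne⟩
  · rintro ⟨p, q, hp, hq, hpq⟩
    rw [h_mem] at hp hq
    have hex : ∃ i, b i = k := ⟨p, hp.2⟩
    refine ⟨Nat.find hex, Nat.find_spec hex, ?_, fun i hi => Nat.find_min hex hi⟩
    have hpf := hb.le_fpos hp.1
    have hqf := hb.le_fpos hq.1
    have := Nat.find_min' hex hp.2
    have := Nat.find_min' hex hq.2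
    rw [hp.2] at hpf
    rw [hq.2] at hqf
    lia

theorem IsBracketFun.depth_eq_stackSize {ν : List Bool} {b : ℕ → ℕ} (hb : IsBracketFun ν b)
    {k s : ℕ} (hs : IsRaisable ν b k s) :
    depth ν (countBelow ν.length b) s = stackSize ν (countBelow ν.length b) k := by
  obtain ⟨rfl, hsf, h_ne⟩ := hs
  have hsl := hsf.le.trans (fpos_le_length ν _)
  rw [hb.depth_eq_card hsl, ← hb.card_largerBefore (hb.le_northSteps hsl)]
  congr 1
  ext i
  rw [Finset.mem_filter, Finset.mem_range, mem_largerBefore]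
  constructor
  · rintro ⟨his, hi⟩
    have := hb.le_of_le_fpos his ((le_fpos_iff (hb.le_northSteps (by lia)) hsl).2 hi)
    have := h_ne i his
    lia
  · rintro ⟨hif, hi⟩
    refine ⟨not_le.1 fun hsi => ?_, (hb.pathHeight_le hsl).trans hi.le⟩
    rcases hsi.eq_or_lt with rfl | hsi
    exacts [lt_irrefl _ hi, (hb.le_of_le_fpos hsi hif).not_gt hi]

/-- The value `v` is the first one after `k` at which the stack is no larger than at `k`. This is
the value to which a covering relation raises the first occurrence of `k`. -/
structure IsStackReturn (ν : List Bool) (c : ℕ → ℕ) (k v : ℕ) : Prop where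
  lt : k < v
  le_northSteps : v ≤ northSteps ν
  stackSize_lt : ∀ {j}, k < j → j < v → stackSize ν c k < stackSize ν c j
  stackSize_le : stackSize ν c v ≤ stackSize ν c k

theorem IsContent.exists_isStackReturn {ν : List Bool} {c : ℕ → ℕ} (hc : IsContent ν c) {k : ℕ}
    (hk : k < northSteps ν) : ∃ v, IsStackReturn ν c k v := by
  have hex : ∃ v, k < v ∧ stackSize ν c v ≤ stackSize ν c k :=
    ⟨northSteps ν, hk, by rw [hc.stackSize_northSteps]; exact Nat.zero_le _⟩
  obtain ⟨hkv, hv⟩ := Nat.find_spec hex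
  exact ⟨Nat.find hex, hkv,
    Nat.find_min' hex ⟨hk, by rw [hc.stackSize_northSteps]; exact Nat.zero_le _⟩,
    fun {j} hkj hj => not_le.1 fun hle => Nat.find_min hex hj ⟨hkj, hle⟩, hv⟩

/-- The content obtained from `c` when an entry `k` is raised to `v`. -/
def raiseContent (c : ℕ → ℕ) (k v l : ℕ) : ℕ := if k < l ∧ l ≤ v then c l - 1 else c l

theorem IsContent.isContent_raiseContent {ν : List Bool} {c : ℕ → ℕ} (hc : IsContent ν c)
    {k v : ℕ} (hk : c k + 2 ≤ c (k + 1)) (hv : v ≤ northSteps ν) :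
    IsContent ν (raiseContent c k v) where
  zero := by simp [raiseContent, hc.zero]
  lt_succ {l} hl := by
    have := hc.lt_succ hl
    have h_pos (h : 0 < l) : 0 < c l := by simpa only [hc.zero] using hc.lt h (by lia)
    rw [raiseContent, raiseContent]
    rcases eq_or_ne l k with rfl | hlk
    · split_ifs <;> lia
    · split_ifs <;> lia
  le_fpos_succ {l} hl := by
    have := hc.le_fpos_succ hl
    rw [raiseContent]
    split_ifs <;> lia
  last {l} hl := by rw [raiseContent, if_neg (by lia), hc.last hl]

theorem IsContent.stackSize_raiseContent {ν : List Bool} {c : ℕ → ℕ} (hc : IsContent ν c)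
    {k v l : ℕ} (hl : l ≤ northSteps ν) : stackSize ν (raiseContent c k v) l =
      stackSize ν c l + if k ≤ l ∧ l < v then 1 else 0 := by
  have := hc.le_fpos_succ hl
  have := hc.lt_succ hl
  simp only [stackSize, raiseContent]
  split_ifs <;> lia

theorem IsContent.depth_raiseContent {ν : List Bool} {c : ℕ → ℕ} (hc : IsContent ν c)
    {k v i : ℕ} (hi : i ≤ ν.length) : depth ν (raiseContent c k v) i =
      depth ν c i + if k < pathHeight ν i ∧ pathHeight ν i ≤ v then 1 else 0 := by
  have := hc.apply_pathHeight_le hi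
  simp only [depth, raiseContent]
  split_ifs with h
  · have := hc.lt (j := 0) (k := pathHeight ν i) (by lia)
      ((pathHeight_le_northSteps ν i).trans (Nat.le_succ _))
    lia
  · rfl

theorem IsContent.eq_of_depth_eq {ν : List Bool} {c : ℕ → ℕ} (hc : IsContent ν c) {i j k : ℕ}
    (hi : i ≤ ν.length) (hj : j ≤ ν.length) (hik : bracketOfContent ν c i = k)
    (hjk : bracketOfContent ν c j = k) (h : depth ν c i = depth ν c j) : i = j := by
  have hik' := (hc.bracketOfContent_mem i).1
  have hjk' := (hc.bracketOfContent_mem j).1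
  rcases lt_trichotomy i j with hij | hij | hij
  · exact absurd h (hc.depth_lt_depth hij hj (by lia)).ne
  · exact hij
  · exact absurd h (hc.depth_lt_depth hij hi (by lia)).ne'

theorem IsContent.add_two_le {ν : List Bool} {c : ℕ → ℕ} (hc : IsContent ν c) {k s : ℕ}
    (hs : IsRaisable ν (bracketOfContent ν c) k s) (hk : k ≤ northSteps ν) :
    c k + 2 ≤ c (k + 1) := by
  rw [← hc.countBelow_bracketOfContent]
  exact (hc.isBracketFun_bracketOfContent.exists_isRaisable_iff hk).1 ⟨s, hs⟩

theorem IsContent.depth_eq_stackSize {ν : List Bool} {c : ℕ → ℕ} (hc : IsContent ν c) {k s : ℕ}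
    (hs : IsRaisable ν (bracketOfContent ν c) k s) : depth ν c s = stackSize ν c k := by
  simpa only [hc.countBelow_bracketOfContent] using
    hc.isBracketFun_bracketOfContent.depth_eq_stackSize hs

theorem IsContent.bracketOfContent_raiseContent_self {ν : List Bool} {c : ℕ → ℕ}
    (hc : IsContent ν c) {k s v : ℕ} (hs : IsRaisable ν (bracketOfContent ν c) k s)
    (hv : IsStackReturn ν c k v) : bracketOfContent ν (raiseContent c k v) s = v := by
  have hvn := hv.le_northSteps
  have hkv := hv.lt
  have hc' := hc.isContent_raiseContent (hc.add_two_le hs (by lia)) hvn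
  obtain ⟨h_le, -, h_depth⟩ := hc.bracketOfContent_eq_iff.1 hs.apply_eq
  rw [hc'.bracketOfContent_eq_iff, hc.depth_raiseContent hs.le_length,
    hc.stackSize_raiseContent hvn, if_neg (by lia), if_neg (by lia), add_zero, add_zero]
  refine ⟨by lia, (hc.depth_eq_stackSize hs).symm ▸ hv.stackSize_le, fun j hij hjv => ?_⟩
  rw [hc.stackSize_raiseContent (by lia)]
  rcases lt_trichotomy j k with hjk | rfl | hjk
  · exact (h_depth j hij hjk).trans_le (Nat.le_add_right _ _)
  · rw [if_pos ⟨le_rfl, hkv⟩, hc.depth_eq_stackSize hs]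
    exact Nat.lt_succ_self _
  · rw [hc.depth_eq_stackSize hs]
    exact (hv.stackSize_lt hjk hjv).trans_le (Nat.le_add_right _ _)

theorem IsContent.bracketOfContent_raiseContent_of_ne {ν : List Bool} {c : ℕ → ℕ}
    (hc : IsContent ν c) {k s v i : ℕ} (hs : IsRaisable ν (bracketOfContent ν c) k s)
    (hv : IsStackReturn ν c k v) (hi : i ≤ ν.length) (his : i ≠ s) :
    bracketOfContent ν (raiseContent c k v) i = bracketOfContent ν c i := by
  have hvn := hv.le_northSteps
  have hkv := hv.lt
  have hin := hc.isBracketFun_bracketOfContent.le_northSteps hi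
  have hc' := hc.isContent_raiseContent (hc.add_two_le hs (by lia)) hvn
  obtain ⟨w, hw⟩ : ∃ w, bracketOfContent ν c i = w := ⟨_, rfl⟩
  obtain ⟨h_le, h_stack, h_depth⟩ := hc.bracketOfContent_eq_iff.1 hw
  rw [hw] at hin ⊢
  rw [hc'.bracketOfContent_eq_iff, hc.depth_raiseContent hi, hc.stackSize_raiseContent hin]
  refine ⟨h_le, ?_, fun j hij hjw => ?_⟩
  · have h_ne (hwk : w = k) : depth ν c i ≠ stackSize ν c k := fun h =>
      his (hc.eq_of_depth_eq hi hs.le_length (hw.trans hwk) hs.apply_eq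
        (h.trans (hc.depth_eq_stackSize hs).symm))
    have h_lt (hik : pathHeight ν i ≤ k) (hkw : k < w) := h_depth k hik hkw
    have h_return := @hv.stackSize_lt w
    rcases eq_or_ne w k with rfl | hwk
    · have := h_ne rfl
      split_ifs <;> lia
    · split_ifs <;> lia
  · have := h_depth j hij hjw
    rw [hc.stackSize_raiseContent (by lia)]
    by_cases hki : k < pathHeight ν i ∧ pathHeight ν i ≤ v
    · have h_return : stackSize ν c v ≤ depth ν c i := by
        obtain ⟨l, hl⟩ : ∃ l, pathHeight ν i = l + 1 := ⟨pathHeight ν i - 1, by lia⟩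
        refine hv.stackSize_le.trans (le_trans ?_ (stackSize_le_depth hi hl))
        rcases (show k ≤ l by lia).eq_or_lt with rfl | hkl
        exacts [le_rfl, (hv.stackSize_lt hkl (by lia)).le]
      have hjv : j < v := by
        by_contra! hvj
        exact (h_depth v hki.2 (by lia)).not_ge h_return
      rw [if_pos hki, if_pos (by lia)]
      lia
    · rw [if_neg hki]
      lia

theorem IsContent.bracketOfContent_raiseContent {ν : List Bool} {c : ℕ → ℕ} (hc : IsContent ν c)
    {k s v i : ℕ} (hs : IsRaisable ν (bracketOfContent ν c) k s) (hv : IsStackReturn ν c k v)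
    (hi : i ≤ ν.length) : bracketOfContent ν (raiseContent c k v) i =
      Function.update (bracketOfContent ν c) s v i := by
  rcases eq_or_ne i s with rfl | his
  · rw [Function.update_self, hc.bracketOfContent_raiseContent_self hs hv]
  · rw [Function.update_of_ne his, hc.bracketOfContent_raiseContent_of_ne hs hv hi his]

theorem IsBracketFun.exists_isRaisable_lt {ν : List Bool} {b d : ℕ → ℕ} (hb : IsBracketFun ν b)
    (hd : IsBracketFun ν d) (hle : ∀ i ≤ ν.length, b i ≤ d i) (hne : ∃ i ≤ ν.length, b i ≠ d i) :
    ∃ s, IsRaisable ν b (b s) s ∧ b s < d s := by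
  obtain ⟨hsl, hs⟩ := Nat.find_spec hne
  set s := Nat.find hne
  have hlt : b s < d s := (hle s hsl).lt_of_ne hs
  have hf : s ≠ fpos ν (b s) := fun h => by
    have := hd.map_fpos (hb.le_northSteps hsl)
    rw [← h] at this
    exact hs this.symm
  refine ⟨s, ⟨rfl, (hb.le_fpos hsl).lt_of_ne hf, fun i his hi => ?_⟩, hlt⟩
  have hdi : b i = d i := by
    by_contra! hne'
    exact Nat.find_min hne his ⟨by lia, hne'⟩
  have := hd.le_of_le_fpos his (by rw [← hdi, hi]; exact hb.le_fpos hsl)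
  lia

theorem IsContent.isStackReturn_le {ν : List Bool} {c d : ℕ → ℕ} (hc : IsContent ν c)
    (hd : IsBracketFun ν d) (hle : ∀ i ≤ ν.length, bracketOfContent ν c i ≤ d i) {k s v : ℕ}
    (hs : IsRaisable ν (bracketOfContent ν c) k s) (hks : k < d s) (hv : IsStackReturn ν c k v) :
    v ≤ d s := by
  by_contra! hlt
  have hds := hd.le_northSteps hs.le_length
  obtain ⟨j, hj, hjs⟩ := hc.exists_depth_eq hds (hv.stackSize_lt hks hlt)
  rw [mem_largerBefore] at hj
  have hjl := hj.1.trans (fpos_le_length ν (d s))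
  have hsj : s < j := by
    refine lt_of_le_of_ne (not_lt.1 fun hlt => ?_) ?_
    · have := (hc.bracketOfContent_mem s).1
      rw [hs.apply_eq] at this
      have := hc.depth_lt_depth hlt hs.le_length (by lia)
      rw [hjs, hc.depth_eq_stackSize hs] at this
      exact lt_irrefl _ this
    · rintro rfl
      exact (hs.apply_eq ▸ hj.2).not_gt hks
  exact (hj.2.trans_le (hle j hjl)).not_ge (hd.le_of_le_fpos hsj hj.1)

/-! ### Covering relations and row contents -/

theorem pathHeight_eq_iff {μ : List Bool} {i k : ℕ} (hi : i ≤ μ.length) :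
    pathHeight μ i = k ↔ pathContent μ k ≤ i ∧ i < pathContent μ (k + 1) := by
  have := lt_pathContent_iff hi k
  have := lt_pathContent_iff hi (k + 1)
  lia

theorem valley_iff {μ : List Bool} {i : ℕ} (hi : 0 < i) (hl : i < μ.length) :
    μ.getD (i - 1) true = false ∧ μ.getD i false = true ↔
      pathContent μ (pathHeight μ i) < i ∧ pathContent μ (pathHeight μ i + 1) = i + 1 := by
  have h_pred := getD_eq_true_iff_pathHeight_succ (μ := μ) (i := i - 1) (by lia) true
  rw [Nat.sub_add_cancel hi] at h_pred
  have h_le := pathHeight_succ_le μ (i - 1)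
  rw [Nat.sub_add_cancel hi] at h_le
  have := pathHeight_mono μ (Nat.sub_le i 1)
  have := pathHeight_succ_le μ i
  have := lt_pathContent_iff (μ := μ) (i := i - 1) (by lia) (pathHeight μ i)
  have := lt_pathContent_iff hl.le (pathHeight μ i + 1)
  have := lt_pathContent_iff (i := i + 1) hl (pathHeight μ i + 1)
  rw [← Bool.not_eq_true, h_pred, getD_eq_true_iff_pathHeight_succ hl]
  lia

/-- The path obtained by exchanging the `i`-th step of `μ` (counted from `1`), which is to be an
east step, with the subpath from the `i`-th to the `j`-th point (counted from `0`). -/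
def rotPath (μ : List Bool) (i j : ℕ) : List Bool :=
  μ.take (i - 1) ++ (μ.drop i).take (j - i) ++ [false] ++ μ.drop j

theorem length_rotPath {μ : List Bool} {i j : ℕ} (hi : 0 < i) (hij : i < j) (hj : j ≤ μ.length) :
    (rotPath μ i j).length = μ.length := by
  simp only [rotPath, List.length_append, List.length_take, List.length_drop, List.length_singleton]
  lia

theorem pathHeight_rotPath {μ : List Bool} {i j : ℕ} (hi : 0 < i) (hij : i < j)
    (hj : j ≤ μ.length) (h_east : pathHeight μ (i - 1) = pathHeight μ i) (t : ℕ) :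
    pathHeight (rotPath μ i j) t = pathHeight μ (if i - 1 ≤ t ∧ t < j then t + 1 else t) := by
  have h_false (t : ℕ) : pathHeight [false] t = 0 :=
    Nat.le_zero.1 (pathHeight_le_northSteps [false] t)
  have h_le := pathHeight_mono μ hij.le
  have h_len : (μ.take (i - 1)).length = i - 1 := by simp; lia
  have h_len' : ((μ.drop i).take (j - i)).length = j - i := by simp; lia
  simp only [rotPath, pathHeight_append, List.length_append, List.length_singleton, h_len, h_len',
    h_false, pathHeight_take, pathHeight_drop]
  split_ifs with h
  · have := pathHeight_mono μ (show i ≤ t + 1 by lia)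
    rw [min_eq_right h.1, h_east, min_eq_left (show t - (i - 1) ≤ j - i by lia),
      show i + (t - (i - 1)) = t + 1 by lia, show t - (i - 1 + (j - i) + 1) = 0 by lia]
    lia
  · rcases lt_or_ge t (i - 1) with ht | ht
    · simp [min_eq_left ht.le, show t - (i - 1) = 0 by lia,
        show t - (i - 1 + (j - i) + 1) = 0 by lia]
    · have := pathHeight_mono μ (show j ≤ t by lia)
      rw [min_eq_right ht, h_east, min_eq_right (show j - i ≤ t - (i - 1) by lia),
        show i + (j - i) = j by lia, show j + (t - (i - 1 + (j - i) + 1)) = t by lia]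
      lia

theorem pathContent_rotPath {μ : List Bool} {i j : ℕ} (hij : i < j) (hj : j ≤ μ.length)
    (h_east : pathContent μ (pathHeight μ i) < i)
    (h_north : pathContent μ (pathHeight μ i + 1) = i + 1) : pathContent (rotPath μ i j) =
      raiseContent (pathContent μ) (pathHeight μ i) (pathHeight μ j) := by
  have hi : 0 < i := by lia
  have h_east' : pathHeight μ (i - 1) = pathHeight μ i := by
    rw [pathHeight_eq_iff (by lia)]
    lia
  have hle := countBelow_le μ.length (pathHeight μ)
  funext l
  rw [pathContent, length_rotPath hi hij hj]
  refine countBelow_eq ?_ fun t ht => ?_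
  · have : pathContent μ l ≤ μ.length + 1 := hle l
    rw [raiseContent]
    split_ifs <;> lia
  · rw [pathHeight_rotPath hi hij hj h_east', ← lt_pathContent_iff (by split_ifs <;> lia),
      raiseContent]
    have := lt_pathContent_iff (show i ≤ μ.length by lia) l
    have := lt_pathContent_iff (show i - 1 ≤ μ.length by lia) l
    have := lt_pathContent_iff hj l
    split_ifs <;> lia

/-- The number of east steps which can be taken from the `i`-th point of `μ` inside `A_ν`. -/
noncomputable def slack (ν μ : List Bool) (i : ℕ) : ℕ := fpos ν (pathHeight μ i) - i

/-- The point of `μ` at position `i` is a valley (in terms of row contents), and `j` is the next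
position of the same slack. -/
structure IsRotationAt (ν μ : List Bool) (i j : ℕ) : Prop where
  lt : i < j
  le_length : j ≤ μ.length
  east : pathContent μ (pathHeight μ i) < i
  north : pathContent μ (pathHeight μ i + 1) = i + 1
  slack_eq : slack ν μ j = slack ν μ i
  slack_ne : ∀ {t}, i < t → t < j → slack ν μ t ≠ slack ν μ i

theorem tamariCover_iff_isRotationAt {ν μ μ' : List Bool} (h : IsNuPath ν μ) (h' : IsNuPath ν μ') :
    TamariCover ν μ μ' ↔ ∃ i j, IsRotationAt ν μ i j ∧ μ' = rotPath μ i j := by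
  have h_slack {t : ℕ} (ht : t ≤ μ.length) : horiz ν (pointAt μ t) = slack ν μ t :=
    h.horiz_pointAt (h.length_eq ▸ ht)
  simp only [TamariCover, h, h', true_and]
  refine exists_congr fun i => exists_congr fun j => ?_
  constructor
  · rintro ⟨hi, hij, hj, h_east, h_north, h_eq, h_ne, rfl⟩
    have hv := (valley_iff hi (by lia)).1 ⟨h_east, h_north⟩
    rw [h_slack hj, h_slack (by lia)] at h_eq
    refine ⟨⟨hij, hj, hv.1, hv.2, h_eq, fun {t} hit htj => ?_⟩, rfl⟩
    rw [← h_slack (by lia), ← h_slack (by lia)]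
    exact h_ne t hit htj
  · rintro ⟨⟨hij, hj, h_east, h_north, h_eq, h_ne⟩, rfl⟩
    have hi : 0 < i := by lia
    obtain ⟨h_east, h_north⟩ := (valley_iff hi (by lia)).2 ⟨h_east, h_north⟩
    rw [← h_slack hj, ← h_slack (by lia)] at h_eq
    refine ⟨hi, hij, hj, h_east, h_north, h_eq, fun t hit htj => ?_, rfl⟩
    rw [h_slack (by lia), h_slack (by lia)]
    exact h_ne hit htj

theorem stackSize_pathContent_le_slack {ν μ : List Bool} {i : ℕ} (hi : i ≤ μ.length) :
    stackSize ν (pathContent μ) (pathHeight μ i) ≤ slack ν μ i := by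
  have := (lt_pathContent_iff hi (pathHeight μ i + 1)).2 (Nat.lt_succ_self _)
  rw [stackSize, slack]
  lia

theorem slack_eq_stackSize {ν μ : List Bool} {i k : ℕ} (hi : pathHeight μ i = k)
    (h : pathContent μ (k + 1) = i + 1) : slack ν μ i = stackSize ν (pathContent μ) k := by
  rw [stackSize, slack, hi, h, Nat.add_sub_add_right]

theorem IsNuPath.slack_le_succ {ν μ : List Bool} (h : IsNuPath ν μ) (i : ℕ) :
    slack ν μ i ≤ slack ν μ (i + 1) + 1 := by
  have := fpos_mono (pathHeight_mono μ (Nat.le_succ i))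
    (h.northSteps_eq ▸ pathHeight_le_northSteps μ (i + 1))
  rw [slack, slack]
  lia

theorem IsRotationAt.slack_lt {ν μ : List Bool} {i j t : ℕ} (hr : IsRotationAt ν μ i j)
    (h : IsNuPath ν μ) (hit : i < t) (htj : t < j) : slack ν μ i < slack ν μ t := by
  induction t, Nat.succ_le_of_lt hit using Nat.le_induction with
  | base =>
    refine (hr.slack_ne hit htj).symm.lt_of_le ?_
    have hl := hr.le_length
    have h_north := hr.north
    have h_lt : pathHeight μ i < pathHeight μ (i + 1) := by
      have := lt_pathContent_iff (μ := μ) (i := i + 1) (by lia) (pathHeight μ i + 1)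
      lia
    have := fpos_lt_fpos h_lt (h.northSteps_eq ▸ pathHeight_le_northSteps μ (i + 1))
    rw [slack, slack, Nat.succ_eq_add_one]
    lia
  | succ t hit' ih =>
    have := ih (by lia) (by lia)
    have := hr.slack_ne hit htj
    have := h.slack_le_succ t
    lia

theorem IsNuPath.exists_last_of_height {ν μ : List Bool} (h : IsNuPath ν μ) {l : ℕ}
    (hl : l ≤ northSteps ν) :
    ∃ t ≤ μ.length, pathHeight μ t = l ∧ pathContent μ (l + 1) = t + 1 := by
  have h_lt := h.isContent.lt_succ hl
  have h_le := h.isContent.le_length_add_one (l + 1)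
  have ht : pathContent μ (l + 1) - 1 ≤ μ.length := by rw [h.length_eq]; lia
  exact ⟨_, ht, (pathHeight_eq_iff ht).2 ⟨by lia, by lia⟩, by lia⟩

theorem IsRotationAt.isStackReturn {ν μ : List Bool} {i j : ℕ} (hr : IsRotationAt ν μ i j)
    (h : IsNuPath ν μ) :
    IsStackReturn ν (pathContent μ) (pathHeight μ i) (pathHeight μ j) := by
  have hij := hr.lt
  have hj := hr.le_length
  have h_north := hr.north
  have hjn : pathHeight μ j ≤ northSteps ν := h.northSteps_eq ▸ pathHeight_le_northSteps μ j
  have h_stack := slack_eq_stackSize (ν := ν) rfl h_north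
  refine ⟨?_, hjn, fun {l} hil hlj => ?_, ?_⟩
  · have := lt_pathContent_iff hj (pathHeight μ i + 1)
    lia
  · obtain ⟨t, -, ht, ht'⟩ := h.exists_last_of_height (show l ≤ northSteps ν by lia)
    rw [← h_stack, ← slack_eq_stackSize ht ht']
    refine hr.slack_lt h ?_ ?_ <;> by_contra! hle <;> have := pathHeight_mono μ hle <;> lia
  · rw [← h_stack, ← hr.slack_eq]
    exact stackSize_pathContent_le_slack hj

theorem IsStackReturn.exists_slack_eq {ν μ : List Bool} {k v : ℕ}
    (hv : IsStackReturn ν (pathContent μ) k v) (h : IsNuPath ν μ) :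
    ∃ j ≤ μ.length, pathHeight μ j = v ∧ slack ν μ j = stackSize ν (pathContent μ) k := by
  have hc := h.isContent
  have hkv := hv.lt
  have hvn := hv.le_northSteps
  have h_stack_pred : stackSize ν (pathContent μ) k ≤ stackSize ν (pathContent μ) (v - 1) := by
    rcases (show k ≤ v - 1 by lia).eq_or_lt with hkv | hkv
    exacts [(congrArg _ hkv).le, (hv.stackSize_lt hkv (by lia)).le]
  have h_stack_v := hv.stackSize_le
  have h_pred := hc.le_fpos_succ (k := v - 1) (by lia)
  have h_pos := hc.lt_succ (k := v - 1) (by lia)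
  have h_lt_succ := hc.lt_succ hvn
  have h_fpos_lt := fpos_lt_fpos (show v - 1 < v by lia) hvn
  rw [stackSize.eq_def ν _ (v - 1)] at h_stack_pred
  have hl : fpos ν v - stackSize ν (pathContent μ) k ≤ μ.length := by
    have := fpos_le_length ν v
    rw [h.length_eq]
    lia
  have hj : pathHeight μ (fpos ν v - stackSize ν (pathContent μ) k) = v := by
    rw [stackSize.eq_def ν _ v] at h_stack_v
    rw [Nat.sub_add_cancel (by lia)] at h_stack_pred h_pred
    rw [pathHeight_eq_iff hl]
    lia
  refine ⟨_, hl, hj, ?_⟩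
  rw [slack, hj]
  lia

theorem IsStackReturn.exists_isRotationAt {ν μ : List Bool} {k v : ℕ}
    (hv : IsStackReturn ν (pathContent μ) k v) (h : IsNuPath ν μ)
    (hk : pathContent μ k + 2 ≤ pathContent μ (k + 1)) :
    ∃ i j, IsRotationAt ν μ i j ∧ pathHeight μ i = k ∧ pathHeight μ j = v := by
  have hkv := hv.lt
  obtain ⟨i, -, rfl, hi⟩ :=
    h.exists_last_of_height (show k ≤ northSteps ν from hkv.le.trans hv.le_northSteps)
  obtain ⟨j, hj, rfl, h_slack_j⟩ := hv.exists_slack_eq h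
  have h_slack_i := slack_eq_stackSize (ν := ν) rfl hi
  have hij : i < j := by
    by_contra! hji
    exact hkv.not_ge (pathHeight_mono μ hji)
  refine ⟨i, j, ⟨hij, hj, by lia, hi, h_slack_j.trans h_slack_i.symm, fun {t} hit htj => ?_⟩,
    rfl, rfl⟩
  have htl : t ≤ μ.length := htj.le.trans hj
  rw [h_slack_i]
  rcases (pathHeight_mono μ htj.le).eq_or_lt with htv | htv
  · have := h.le_fpos (h.length_eq ▸ hj)
    rw [← h_slack_j, slack, slack, htv]
    lia
  · have hkt := lt_pathContent_iff htl (pathHeight μ i + 1)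
    exact ((hv.stackSize_lt (by lia) htv).trans_le (stackSize_pathContent_le_slack htl)).ne'

theorem tamariCover_iff_pathContent {ν μ μ' : List Bool} (h : IsNuPath ν μ) (h' : IsNuPath ν μ') :
    TamariCover ν μ μ' ↔ ∃ k v, pathContent μ k + 2 ≤ pathContent μ (k + 1) ∧
      IsStackReturn ν (pathContent μ) k v ∧ pathContent μ' = raiseContent (pathContent μ) k v := by
  rw [tamariCover_iff_isRotationAt h h']
  constructor
  · rintro ⟨i, j, hr, rfl⟩
    exact ⟨_, _, by have := hr.east; have := hr.north; lia, hr.isStackReturn h,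
      pathContent_rotPath hr.lt hr.le_length hr.east hr.north⟩
  · rintro ⟨k, v, hk, hv, hμ'⟩
    obtain ⟨i, j, hr, rfl, rfl⟩ := hv.exists_isRotationAt h hk
    exact ⟨i, j, hr, pathContent_injective
      (hμ'.trans (pathContent_rotPath hr.lt hr.le_length hr.east hr.north).symm)⟩

/-! ### Comparison of the two orders -/

theorem TamariCover.bracketFun_le {ν μ μ' : List Bool} (hμ : TamariCover ν μ μ') {i : ℕ}
    (hi : i ≤ ν.length) : bracketFun ν μ i ≤ bracketFun ν μ' i := by
  have h : IsNuPath ν μ := hμ.1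
  obtain ⟨k, v, hk, hv, hμ'⟩ := (tamariCover_iff_pathContent h hμ.2.1).1 hμ
  obtain ⟨s, hs⟩ := (h.isBracketFun.exists_isRaisable_iff (hv.lt.le.trans hv.le_northSteps)).2
    (by rwa [h.countBelow_bracketFun])
  rw [bracketFun.eq_def ν μ', hμ', h.isContent.bracketOfContent_raiseContent hs hv hi]
  rcases eq_or_ne i s with rfl | his
  · rw [Function.update_self, hs.apply_eq]
    exact hv.lt.le
  · rw [Function.update_of_ne his, bracketFun]

theorem TamariLE.bracketFun_le {ν μ μ' : List Bool} (hμ : TamariLE ν μ μ') {i : ℕ}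
    (hi : i ≤ ν.length) : bracketFun ν μ i ≤ bracketFun ν μ' i := by
  induction hμ with
  | refl => exact le_rfl
  | tail _ hcov ih => exact ih.trans (hcov.bracketFun_le hi)

theorem IsNuPath.eq_of_bracketFun_eq {ν μ μ' : List Bool} (h : IsNuPath ν μ) (h' : IsNuPath ν μ')
    (heq : ∀ i ≤ ν.length, bracketFun ν μ i = bracketFun ν μ' i) : μ = μ' := by
  refine pathContent_injective ?_
  rw [← h.countBelow_bracketFun, ← h'.countBelow_bracketFun]
  exact countBelow_congr heq

theorem IsNuPath.exists_tamariCover_le {ν μ μ' : List Bool} (h : IsNuPath ν μ) (h' : IsNuPath ν μ')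
    (hle : ∀ i ≤ ν.length, bracketFun ν μ i ≤ bracketFun ν μ' i) (hne : μ ≠ μ') :
    ∃ ρ, TamariCover ν μ ρ ∧ (∀ i ≤ ν.length, bracketFun ν ρ i ≤ bracketFun ν μ' i) ∧
      ∃ s ≤ ν.length, bracketFun ν μ s < bracketFun ν ρ s := by
  have hc := h.isContent
  have hd := h'.isBracketFun
  obtain ⟨s, hs, hlt⟩ := h.isBracketFun.exists_isRaisable_lt hd hle <| by
    by_contra! heq
    exact hne (h.eq_of_bracketFun_eq h' heq)
  have hsl := hs.le_length
  have hk : bracketFun ν μ s < northSteps ν := hlt.trans_le (hd.le_northSteps hsl)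
  obtain ⟨v, hv⟩ := hc.exists_isStackReturn hk
  have hk₂ := hc.add_two_le hs hk.le
  obtain ⟨ρ, hρ, hρc⟩ := (hc.isContent_raiseContent hk₂ hv.le_northSteps).exists_isNuPath
  have h_update {i : ℕ} (hi : i ≤ ν.length) :
      bracketFun ν ρ i = Function.update (bracketFun ν μ) s v i := by
    rw [bracketFun, hρc]
    exact hc.bracketOfContent_raiseContent hs hv hi
  refine ⟨ρ, (tamariCover_iff_pathContent h hρ).2 ⟨_, v, hk₂, hv, hρc⟩, fun i hi => ?_, s, hsl, ?_⟩
  · rw [h_update hi]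
    rcases eq_or_ne i s with rfl | his
    · rw [Function.update_self]
      exact hc.isStackReturn_le hd hle hs hlt hv
    · rw [Function.update_of_ne his]
      exact hle i hi
  · rw [h_update hsl, Function.update_self]
    exact hv.lt

theorem IsNuPath.tamariLE_of_bracketFun_le {ν μ μ' : List Bool} (h : IsNuPath ν μ)
    (h' : IsNuPath ν μ') (hle : ∀ i ≤ ν.length, bracketFun ν μ i ≤ bracketFun ν μ' i) :
    TamariLE ν μ μ' := by
  induction hN : ∑ i ∈ Finset.range (ν.length + 1), (bracketFun ν μ' i - bracketFun ν μ i)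
    using Nat.strong_induction_on generalizing μ with
  | _ N ih =>
    rcases eq_or_ne μ μ' with rfl | hne
    · exact Relation.ReflTransGen.refl
    obtain ⟨ρ, hcov, hρ, s, hs, hlt⟩ := h.exists_tamariCover_le h' hle hne
    refine Relation.ReflTransGen.head hcov (ih _ ?_ hcov.2.1 hρ rfl)
    rw [← hN]
    refine Finset.sum_lt_sum (fun i hi => ?_) ⟨s, Finset.mem_range_succ_iff.2 hs, ?_⟩
    · exact Nat.sub_le_sub_left (hcov.bracketFun_le (Finset.mem_range_succ_iff.1 hi)) _
    · exact Nat.sub_lt_sub_left (hlt.trans_le (hρ s hs)) hlt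

theorem tamariLE_iff_bracketFun_le {ν μ μ' : List Bool} (h : IsNuPath ν μ) (h' : IsNuPath ν μ') :
    TamariLE ν μ μ' ↔ ∀ i ≤ ν.length, bracketFun ν μ i ≤ bracketFun ν μ' i :=
  ⟨fun hμ _ => hμ.bracketFun_le, h.tamariLE_of_bracketFun_le h'⟩

theorem listLE_map_range {N : ℕ} {f g : ℕ → ℕ} :
    listLE ((List.range (N + 1)).map f) ((List.range (N + 1)).map g) ↔ ∀ i ≤ N, f i ≤ g i := by
  refine ⟨fun h i hi => ?_, fun h => ⟨by simp, fun i => ?_⟩⟩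
  · simpa [Nat.lt_succ_iff.2 hi] using h.2 i
  · rcases le_or_gt i N with hi | hi
    · simpa [Nat.lt_succ_iff.2 hi] using h i hi
    · simp [List.getElem?_eq_none, Nat.succ_le_of_lt hi]

theorem IsNuPath.isBracketVector_bracketOfPath {ν μ : List Bool} (h : IsNuPath ν μ) :
    IsBracketVector ν (bracketOfPath ν μ) := by
  rw [h.bracketOfPath_eq, isBracketVector_iff]
  refine ⟨by simp, h.isBracketFun.congr fun i hi => ?_⟩
  simp [Nat.lt_succ_iff.2 hi]

theorem IsBracketVector.exists_bracketOfPath_eq {ν : List Bool} {l : List ℕ}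
    (hl : IsBracketVector ν l) : ∃ μ, IsNuPath ν μ ∧ bracketOfPath ν μ = l := by
  obtain ⟨h_length, hb⟩ := isBracketVector_iff.1 hl
  obtain ⟨μ, h, hμ⟩ := hb.isContent.exists_isNuPath
  refine ⟨μ, h, ?_⟩
  rw [h.bracketOfPath_eq]
  refine List.ext_getElem (by simp [h_length]) fun i hi hi' => ?_
  rw [List.getElem_map, List.getElem_range, bracketFun, hμ,
    ← hb.eq_bracketOfContent (by lia), List.getD_eq_getElem _ _ hi']

theorem bracket_order_isomorphism (ν : List Bool) :
    Set.BijOn (bracketOfPath ν) {μ | IsNuPath ν μ} {b | IsBracketVector ν b} ∧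
    ∀ μ μ', IsNuPath ν μ → IsNuPath ν μ' →
      (TamariLE ν μ μ' ↔ listLE (bracketOfPath ν μ) (bracketOfPath ν μ')) := by
  refine ⟨⟨fun μ h => h.isBracketVector_bracketOfPath, fun μ h μ' h' heq => ?_,
    fun b hb => hb.exists_bracketOfPath_eq⟩, fun μ μ' h h' => ?_⟩
  · rw [h.bracketOfPath_eq, h'.bracketOfPath_eq, List.map_inj_left] at heq
    exact h.eq_of_bracketFun_eq h' fun i hi => heq i (List.mem_range.2 (Nat.lt_succ_of_le hi))
  · rw [h.bracketOfPath_eq, h'.bracketOfPath_eq, listLE_map_range]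
    exact tamariLE_iff_bracketFun_le h h'
end

section
/- Let ν be a lattice path with m east and n north steps and let ←ν be the lattice path obtained by reading ν backwards and exchanging north and east steps. The reflection map T ↦ ←T := {(n−y, m−x) : (x,y) ∈ T} is an order-reversing bijection from the rotation lattice of ν-trees onto the rotation lattice of ←ν-trees, and consequently the join of two ν-trees T and T' in the rotation lattice of ν-trees satisfies T ∨ T' = ←(←T ∧ ←T'), where ∧ denotes the meet in the rotation lattice of ←ν-trees. -/
open scoped Classical

/-!
Reflecting across an antidiagonal exchanges the roles of rows and columns and reverses both
coordinate orders. It maps `A_ν` onto `A_{←ν}`, because a point `(x, y)` with `y ≤ n` lies weakly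
above `ν` exactly when `ν` splits as `a ++ b` with `x ≤ #E(a)` and `#N(a) ≤ y`, and this condition
is preserved by replacing `(a, b)` with `(←b, ←a)`. Incompatibility refers to a pair of opposite
corners of a rectangle and its lower right corner; the reflection exchanges the first two and fixes
the third. Hence trees go to trees, and a right rotation, which trades the lower left corner of a
rectangle for the upper right one, goes to a right rotation in the opposite direction.
-/

theorem eastSteps_append (a b : List Bool) : eastSteps (a ++ b) = eastSteps a + eastSteps b :=
  List.count_append

theorem northSteps_append (a b : List Bool) : northSteps (a ++ b) = northSteps a + northSteps b :=
  List.count_append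

theorem revPath_append (a b : List Bool) : revPath (a ++ b) = revPath b ++ revPath a := by
  simp [revPath]

theorem revPath_revPath (ν : List Bool) : revPath (revPath ν) = ν := by
  simp [revPath, Function.comp_def]

theorem eastSteps_revPath (ν : List Bool) : eastSteps (revPath ν) = northSteps ν := by
  simpa [eastSteps, northSteps, revPath] using
    List.count_map_of_injective ν (fun s => !s) Bool.not_injective true

theorem northSteps_revPath (ν : List Bool) : northSteps (revPath ν) = eastSteps ν := by
  rw [← eastSteps_revPath, revPath_revPath]

/-- The final lattice point `(m, n)` of a path. -/
def endpoint (ν : List Bool) : ℕ × ℕ := (eastSteps ν, northSteps ν)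

theorem endpoint_revPath (ν : List Bool) : endpoint (revPath ν) = (endpoint ν).swap :=
  Prod.ext (eastSteps_revPath ν) (northSteps_revPath ν)

theorem heightAt_append_le {a : List Bool} {x : ℕ} (b : List Bool) (hx : x ≤ eastSteps a) :
    heightAt (a ++ b) x ≤ northSteps a := by
  fun_induction heightAt a x <;> simp_all [heightAt, eastSteps, northSteps]

theorem exists_append_heightAt {ν : List Bool} {x : ℕ} (hx : x ≤ eastSteps ν) :
    ∃ a b, a ++ b = ν ∧ eastSteps a = x ∧ northSteps a = heightAt ν x := by
  fun_induction heightAt ν x with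
  | case1 ν => exact ⟨[], ν, rfl, rfl, rfl⟩
  | case2 x => simp [eastSteps] at hx
  | case3 ν x ih =>
    obtain ⟨a, b, rfl, hE, hN⟩ := ih (by simpa [eastSteps] using hx)
    exact ⟨true :: a, b, rfl, by simpa [eastSteps] using hE, by simpa [northSteps] using hN⟩
  | case4 ν x ih =>
    obtain ⟨a, b, rfl, hE, hN⟩ := ih (by simpa [eastSteps] using hx)
    exact ⟨false :: a, b, rfl, by simpa [eastSteps] using hE, by simpa [northSteps] using hN⟩

theorem mem_APts_iff_exists_append {ν : List Bool} {p : ℕ × ℕ} :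
    p ∈ APts ν ↔
      p.2 ≤ northSteps ν ∧ ∃ a b, a ++ b = ν ∧ p.1 ≤ eastSteps a ∧ northSteps a ≤ p.2 := by
  constructor
  · rintro ⟨hE, hheight, hN⟩
    obtain ⟨a, b, hab, ha, ha'⟩ := exists_append_heightAt hE
    exact ⟨hN, a, b, hab, ha.ge, ha'.trans_le hheight⟩
  · rintro ⟨hN, a, b, rfl, hE, ha⟩
    exact ⟨hE.trans (eastSteps_append a b ▸ Nat.le_add_right _ _),
      (heightAt_append_le b hE).trans ha, hN⟩

theorem APts_subset_Iic_endpoint (ν : List Bool) : APts ν ⊆ Set.Iic (endpoint ν) :=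
  fun _ hp => ⟨hp.1, hp.2.2⟩

/-- The reflection of the rectangle `[0, c.1] × [0, c.2]` onto `[0, c.2] × [0, c.1]` across an
antidiagonal, so that `revTree ν` is the image under `reflectPoint (endpoint ν)`. The truncated
subtraction gives junk values outside `Set.Iic c`. -/
def reflectPoint (c p : ℕ × ℕ) : ℕ × ℕ := (c.2 - p.2, c.1 - p.1)

theorem leftInvOn_reflectPoint (c : ℕ × ℕ) :
    Set.LeftInvOn (reflectPoint c.swap) (reflectPoint c) (Set.Iic c) :=
  fun _ hp => Prod.ext (Nat.sub_sub_self hp.1) (Nat.sub_sub_self hp.2)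

theorem reflectPoint_le (c p : ℕ × ℕ) : reflectPoint c p ≤ c.swap :=
  ⟨Nat.sub_le _ _, Nat.sub_le _ _⟩

theorem reflectPoint_fst_lt {c p q : ℕ × ℕ} (hq : q ≤ c) (h : p.2 < q.2) :
    (reflectPoint c q).1 < (reflectPoint c p).1 :=
  Nat.sub_lt_sub_left (h.trans_le hq.2) h

theorem reflectPoint_snd_lt {c p q : ℕ × ℕ} (hq : q ≤ c) (h : p.1 < q.1) :
    (reflectPoint c q).2 < (reflectPoint c p).2 :=
  Nat.sub_lt_sub_left (h.trans_le hq.1) h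

theorem reflectPoint_mem_APts {ν : List Bool} {p : ℕ × ℕ} (hp : p ∈ APts ν) :
    reflectPoint (endpoint ν) p ∈ APts (revPath ν) := by
  obtain ⟨-, a, b, rfl, hE, hN⟩ := mem_APts_iff_exists_append.1 hp
  refine mem_APts_iff_exists_append.2
    ⟨?_, revPath b, revPath a, (revPath_append a b).symm, ?_, ?_⟩
  · rw [northSteps_revPath]
    exact Nat.sub_le _ _
  · simp only [reflectPoint, endpoint, northSteps_append, eastSteps_revPath]
    omega
  · simp only [reflectPoint, endpoint, eastSteps_append, northSteps_revPath]
    omega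

theorem incompatible_reflectPoint {ν : List Bool} {p q : ℕ × ℕ}
    (hp : p ≤ endpoint ν) (hq : q ≤ endpoint ν) (h : Incompatible ν p q) :
    Incompatible (revPath ν) (reflectPoint (endpoint ν) p) (reflectPoint (endpoint ν) q) := by
  rcases h with ⟨hx, hy, hcorner⟩ | ⟨hx, hy, hcorner⟩
  · exact .inr ⟨reflectPoint_fst_lt hq hy, reflectPoint_snd_lt hq hx, reflectPoint_mem_APts hcorner⟩
  · exact .inl ⟨reflectPoint_fst_lt hp hy, reflectPoint_snd_lt hp hx, reflectPoint_mem_APts hcorner⟩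

theorem compatible_reflectPoint {ν : List Bool} {p q : ℕ × ℕ} (hp : p ≤ endpoint ν)
    (hq : q ≤ endpoint ν) (h : Compatible ν p q) :
    Compatible (revPath ν) (reflectPoint (endpoint ν) p) (reflectPoint (endpoint ν) q) := by
  intro hinc
  have hle (r : ℕ × ℕ) : reflectPoint (endpoint ν) r ≤ endpoint (revPath ν) :=
    (reflectPoint_le _ r).trans_eq (endpoint_revPath ν).symm
  have := incompatible_reflectPoint (hle p) (hle q) hinc
  rw [revPath_revPath, endpoint_revPath, leftInvOn_reflectPoint _ hp,
    leftInvOn_reflectPoint _ hq] at this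
  exact h this

section Trees

variable {ν : List Bool} {T : Set (ℕ × ℕ)}

theorem revTree_subset_APts (hT : T ⊆ APts ν) : revTree ν T ⊆ APts (revPath ν) :=
  Set.image_subset_iff.2 fun _ hp => reflectPoint_mem_APts (hT hp)

theorem revTree_revPath_revTree (hT : T ⊆ APts ν) : revTree (revPath ν) (revTree ν T) = T := by
  change reflectPoint (endpoint (revPath ν)) '' (reflectPoint (endpoint ν) '' T) = T
  rw [endpoint_revPath]
  exact (leftInvOn_reflectPoint _).image_image' (hT.trans (APts_subset_Iic_endpoint ν))

theorem revTree_revTree_revPath (hT : T ⊆ APts (revPath ν)) :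
    revTree ν (revTree (revPath ν) T) = T := by
  simpa only [revPath_revPath] using revTree_revPath_revTree hT

theorem pairwise_compatible_revTree (hT : T ⊆ APts ν) (h : T.Pairwise (Compatible ν)) :
    (revTree ν T).Pairwise (Compatible (revPath ν)) := by
  rintro _ ⟨p, hp, rfl⟩ _ ⟨q, hq, rfl⟩ hne
  exact compatible_reflectPoint (APts_subset_Iic_endpoint ν (hT hp))
    (APts_subset_Iic_endpoint ν (hT hq)) (h hp hq fun hpq => hne (hpq ▸ rfl))

theorem isNuTree_revTree (hT : IsNuTree ν T) : IsNuTree (revPath ν) (revTree ν T) := by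
  obtain ⟨hsub, hcompat, hmax⟩ := hT
  refine ⟨revTree_subset_APts hsub, pairwise_compatible_revTree hsub hcompat, ?_⟩
  intro S hS hScompat hle
  have hTS : T ⊆ revTree (revPath ν) S := by
    rw [← revTree_revPath_revTree hsub]
    exact Set.image_mono hle
  have hST : revTree (revPath ν) S = T :=
    hmax _ (by simpa only [revPath_revPath] using revTree_subset_APts hS)
      (by simpa only [revPath_revPath] using pairwise_compatible_revTree hS hScompat) hTS
  rw [← hST, revTree_revTree_revPath hS]

theorem bijOn_revTree (ν : List Bool) :
    Set.BijOn (revTree ν) {T | IsNuTree ν T} {T | IsNuTree (revPath ν) T} :=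
  Set.InvOn.bijOn (f' := revTree (revPath ν))
    ⟨fun _ hT => revTree_revPath_revTree hT.1, fun _ hT => revTree_revTree_revPath hT.1⟩
    (fun _ hT => isNuTree_revTree hT)
    (fun _ (hT : IsNuTree _ _) => show IsNuTree _ _ by
      simpa only [revPath_revPath] using isNuTree_revTree hT)

end Trees

section Rotations

variable {ν : List Bool} {T T' : Set (ℕ × ℕ)} {c p q q' : ℕ × ℕ}

/-- The union of the relative interiors of the four sides of the rectangle with lower left corner
`q` and upper right corner `q'`; a right rotation requires it to contain no point of the tree. -/
def openSides (q q' : ℕ × ℕ) : Set (ℕ × ℕ) :=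
  {q.1, q'.1} ×ˢ Set.Ioo q.2 q'.2 ∪ Set.Ioo q.1 q'.1 ×ˢ {q.2, q'.2}

theorem upperRight_notMem_openSides (q q' : ℕ × ℕ) : q' ∉ openSides q q' := by
  simp [openSides]

theorem reflectPoint_mem_openSides_iff (hp : p ≤ c) (hq : q ≤ c) (hq' : q' ≤ c) :
    reflectPoint c p ∈ openSides (reflectPoint c q') (reflectPoint c q) ↔ p ∈ openSides q q' := by
  simp only [openSides, reflectPoint, Set.mem_union, Set.mem_prod, Set.mem_insert_iff,
    Set.mem_singleton_iff, Set.mem_Ioo]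
  rw [Prod.le_def] at hp hq hq'
  omega

theorem isRightRotationAt_iff :
    IsRightRotationAt T T' q q' ↔
      q.1 < q'.1 ∧ q.2 < q'.2 ∧ q ∈ T ∧ (q.1, q'.2) ∈ T ∧ (q'.1, q.2) ∈ T ∧
        Disjoint T (openSides q q') ∧ T' = insert q' (T \ {q}) := by
  have hsides : Disjoint T (openSides q q') ↔
      (∀ b, q.2 < b → b < q'.2 → (q.1, b) ∉ T) ∧ (∀ a, q.1 < a → a < q'.1 → (a, q.2) ∉ T) ∧
        (∀ a, q.1 < a → a < q'.1 → (a, q'.2) ∉ T) ∧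
          ∀ b, q.2 < b → b < q'.2 → (q'.1, b) ∉ T := by
    simp only [Set.disjoint_right, openSides, Prod.forall, Set.mem_union, Set.mem_prod,
      Set.mem_insert_iff, Set.mem_singleton_iff, Set.mem_Ioo]
    grind
  rw [hsides, Set.insert_eq, Set.union_comm]
  constructor
  · rintro ⟨x, y, x', y', rfl, rfl, hx, hy, hq, hleft, hright, hL, hB, hU, hR, hrot⟩
    exact ⟨hx, hy, hq, hleft, hright, ⟨hL, hB, hU, hR⟩, hrot⟩
  · rintro ⟨hx, hy, hq, hleft, hright, ⟨hL, hB, hU, hR⟩, hrot⟩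
    exact ⟨_, _, _, _, rfl, rfl, hx, hy, hq, hleft, hright, hL, hB, hU, hR, hrot⟩

/-- The upper right corner is incompatible with the lower left one, since the lower right one lies
in `A_ν`. -/
theorem notMem_of_isRightRotationAt (hsub : T ⊆ APts ν) (hT : T.Pairwise (Compatible ν))
    (h : IsRightRotationAt T T' q q') : q' ∉ T := by
  obtain ⟨hx, hy, hq, -, hright, -, -⟩ := isRightRotationAt_iff.1 h
  exact fun hq' => hT hq hq' (fun e => hx.ne (Prod.ext_iff.1 e).1) (.inl ⟨hx, hy, hsub hright⟩)

theorem isRightRotationAt_image_reflectPoint (hT : T ⊆ Set.Iic c) (hq'T : q' ∉ T)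
    (h : IsRightRotationAt T T' q q') :
    IsRightRotationAt (reflectPoint c '' T') (reflectPoint c '' T)
      (reflectPoint c q') (reflectPoint c q) := by
  obtain ⟨hx, hy, hq, hleft, hright, hsides, rfl⟩ := isRightRotationAt_iff.1 h
  have hq'c : q' ≤ c := ⟨(hT hright).1, (hT hleft).2⟩
  set T' := insert q' (T \ {q})
  have hT' : T' ⊆ Set.Iic c := Set.insert_subset hq'c (Set.sdiff_subset.trans hT)
  have hsides' : Disjoint T' (openSides q q') :=
    Set.disjoint_insert_left.2
      ⟨upperRight_notMem_openSides q q', hsides.mono_left Set.sdiff_subset⟩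
  have hq'T' : q' ∈ T' := Set.mem_insert _ _
  have hleft' : (q.1, q'.2) ∈ T' := .inr ⟨hleft, fun e => hy.ne' (Prod.ext_iff.1 e).2⟩
  have hright' : (q'.1, q.2) ∈ T' := .inr ⟨hright, fun e => hx.ne' (Prod.ext_iff.1 e).1⟩
  have hback : insert q (T' \ {q'}) = T := by
    rw [Set.insert_sdiff_self_of_notMem fun hq' => hq'T hq'.1, Set.insert_sdiff_self_of_mem hq]
  have hinj : Set.InjOn (reflectPoint c) T' := (leftInvOn_reflectPoint c).injOn.mono hT'
  refine isRightRotationAt_iff.2 ⟨reflectPoint_fst_lt hq'c hy, reflectPoint_snd_lt hq'c hx,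
    Set.mem_image_of_mem _ hq'T', Set.mem_image_of_mem _ hleft',
    Set.mem_image_of_mem _ hright', ?_, ?_⟩
  · rw [Set.disjoint_left]
    rintro _ ⟨p, hp, rfl⟩ hmem
    exact Set.disjoint_left.1 hsides' hp
      ((reflectPoint_mem_openSides_iff (hT' hp) (hT hq) hq'c).1 hmem)
  · rw [← Set.image_singleton (a := q'), ← hinj.image_sdiff_subset (by simpa using hq'T'),
      ← Set.image_insert_eq, hback]

theorem isRightRotation_revTree (hT : IsNuTree ν T) (h : IsRightRotation T T') :
    IsRightRotation (revTree ν T') (revTree ν T) := by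
  obtain ⟨q, q', h⟩ := h
  exact ⟨_, _, isRightRotationAt_image_reflectPoint (hT.1.trans (APts_subset_Iic_endpoint ν))
    (notMem_of_isRightRotationAt hT.1 hT.2.1 h) h⟩

theorem treeLE_revTree (h : TreeLE ν T T') :
    TreeLE (revPath ν) (revTree ν T') (revTree ν T) :=
  (Relation.ReflTransGen.swap _ _ h).lift (revTree ν) fun _ _ ⟨hA, hB, hrot⟩ =>
    ⟨isNuTree_revTree hB, isNuTree_revTree hA, isRightRotation_revTree hA hrot⟩

theorem treeLE_revTree_iff (hT : T ⊆ APts ν) (hT' : T' ⊆ APts ν) :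
    TreeLE (revPath ν) (revTree ν T') (revTree ν T) ↔ TreeLE ν T T' := by
  refine ⟨fun h => ?_, treeLE_revTree⟩
  simpa only [revPath_revPath, revTree_revPath_revTree hT, revTree_revPath_revTree hT'] using
    treeLE_revTree h

end Rotations

theorem reflection_antiisomorphism_and_join (ν : List Bool) :
    Set.BijOn (revTree ν) {T | IsNuTree ν T} {T | IsNuTree (revPath ν) T} ∧
    (∀ T T', IsNuTree ν T → IsNuTree ν T' →
      (TreeLE ν T T' ↔ TreeLE (revPath ν) (revTree ν T') (revTree ν T))) ∧
    (∀ T T' M, IsNuTree ν T → IsNuTree ν T' → IsNuTree (revPath ν) M →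
      (TreeLE (revPath ν) M (revTree ν T) ∧ TreeLE (revPath ν) M (revTree ν T') ∧
        ∀ S, IsNuTree (revPath ν) S → TreeLE (revPath ν) S (revTree ν T) →
          TreeLE (revPath ν) S (revTree ν T') → TreeLE (revPath ν) S M) →
      (TreeLE ν T (revTree (revPath ν) M) ∧ TreeLE ν T' (revTree (revPath ν) M) ∧
        ∀ S, IsNuTree ν S → TreeLE ν T S → TreeLE ν T' S →
          TreeLE ν (revTree (revPath ν) M) S)) := by
  refine ⟨bijOn_revTree ν, fun T T' hT hT' => (treeLE_revTree_iff hT.1 hT'.1).symm, ?_⟩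
  rintro T T' M hT hT' hM ⟨hMT, hMT', hglb⟩
  obtain ⟨J, hJ, rfl⟩ := (bijOn_revTree ν).surjOn hM
  rw [treeLE_revTree_iff hT.1 hJ.1] at hMT
  rw [treeLE_revTree_iff hT'.1 hJ.1] at hMT'
  rw [revTree_revPath_revTree hJ.1]
  refine ⟨hMT, hMT', fun S hS hTS hT'S => (treeLE_revTree_iff hJ.1 hS.1).1 ?_⟩
  exact hglb _ (isNuTree_revTree hS) (treeLE_revTree hTS) (treeLE_revTree hT'S)
end

section
/- Let ν be a lattice path with m east and n north steps. For every ν-tree T, the product in reading order of the simple transpositions s_{d(p)+1} over the points p ∈ A_ν \ T equals one and the same permutation π_ν, independent of T, and this product is reduced: |A_ν \ T| equals the Coxeter length of π_ν. Conversely, for every subset C ⊆ A_ν such that the transpositions s_{d(p)+1} for p ∈ C, multiplied in reading order, form a reduced expression of π_ν, the complement A_ν \ C is a ν-tree. -/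
open scoped Classical

/-!
Read the points outside a `ν`-tree as the crosses of a pipe dream, of which the tree is made of the
elbows. In a maximal compatible set, as in a reduced pipe dream of `π_ν`, there are only two shapes
near the bottom row, whose last point is never a cross: either all other points of that row are
crosses, or the column above its last point consists of crosses. In the first case the row can be
deleted, in the second one the column, and both notions survive the deletion, so that they coincide
by induction.

That a reduced pipe dream of `π_ν` has one of the two shapes is read off `π_ν`. With rows at heights
`0, …, n`, the inverse of `π_ν` increases on `n + 2, n + 3, …`, so of the letters of the bottom row
only the leftmost one can start a reduced word; hence the crosses of the bottom row form an initial
segment. If that segment misses the penultimate point of the row, the rows above have to send the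
value `U + 1` to `U + n + 1`, where `U` is the abscissa of the last point, and this takes a cross at
abscissa `U` in each of them.
-/

namespace NuTree

section ReducedWords

/-- The simple transposition exchanging `k + 1` and `k + 2`; a point `p` is labelled by
`adjSwap (d p)`. -/
def adjSwap (k : ℕ) : Equiv.Perm ℕ := Equiv.swap (k + 1) (k + 2)

/-- The permutation spelled by a word in the simple transpositions, letters being composed as
functions, so that the last letter acts first. -/
def wordPerm (W : List ℕ) : Equiv.Perm ℕ := (W.map adjSwap).prod

/-- The inversions of a permutation, as pairs of positions. -/
def inversions (σ : Equiv.Perm ℕ) : Set (ℕ × ℕ) := {q | q.1 < q.2 ∧ σ q.2 < σ q.1}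

/-- A word is reduced if it is as short as the Coxeter length of its permutation. -/
def IsReduced (W : List ℕ) : Prop := lenInv (wordPerm W) = W.length

variable {k v : ℕ} {σ : Equiv.Perm ℕ} {V W : List ℕ}

theorem adjSwap_apply (k v : ℕ) :
    adjSwap k v = if v = k + 1 then k + 2 else if v = k + 2 then k + 1 else v :=
  Equiv.swap_apply_def _ _ _

@[simp] theorem adjSwap_apply_left (k : ℕ) : adjSwap k (k + 1) = k + 2 :=
  Equiv.swap_apply_left _ _

@[simp] theorem adjSwap_apply_right (k : ℕ) : adjSwap k (k + 2) = k + 1 :=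
  Equiv.swap_apply_right _ _

@[simp] theorem adjSwap_mul_self (k : ℕ) : adjSwap k * adjSwap k = 1 :=
  Equiv.swap_mul_self _ _

theorem adjSwap_mul_inv_apply (k : ℕ) (σ : Equiv.Perm ℕ) (v : ℕ) :
    (adjSwap k * σ)⁻¹ v = σ⁻¹ (adjSwap k v) := by
  rw [mul_inv_rev, Equiv.Perm.mul_apply, inv_eq_of_mul_eq_one_left (adjSwap_mul_self k)]

@[simp] theorem wordPerm_nil : wordPerm [] = 1 := rfl

@[simp] theorem wordPerm_cons (k : ℕ) (W : List ℕ) :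
    wordPerm (k :: W) = adjSwap k * wordPerm W := by
  simp [wordPerm]

@[simp] theorem wordPerm_append (V W : List ℕ) :
    wordPerm (V ++ W) = wordPerm V * wordPerm W := by
  simp [wordPerm]

theorem wordPerm_apply_of_forall_ne (h : ∀ k ∈ W, v ≠ k + 1 ∧ v ≠ k + 2) :
    wordPerm W v = v := by
  induction W with
  | nil => rfl
  | cons k W ih =>
    rw [List.forall_mem_cons] at h
    rw [wordPerm_cons, Equiv.Perm.mul_apply, ih h.2, adjSwap_apply, if_neg h.1.1, if_neg h.1.2]

theorem inversions_one : inversions 1 = ∅ :=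
  Set.eq_empty_of_forall_notMem fun _ hq => hq.1.not_gt hq.2

theorem inversions_adjSwap_mul_subset (k : ℕ) (σ : Equiv.Perm ℕ) :
    inversions (adjSwap k * σ) ⊆ insert (σ⁻¹ (k + 1), σ⁻¹ (k + 2)) (inversions σ) := by
  rintro ⟨a, b⟩ ⟨hab, hinv⟩
  simp only [Equiv.Perm.mul_apply, adjSwap_apply] at hinv
  simp only [Set.mem_insert_iff, Prod.mk.injEq, Equiv.Perm.eq_inv_iff_eq, inversions,
    Set.mem_ofPred_eq]
  grind

theorem inversions_adjSwap_mul (h : σ⁻¹ (k + 1) < σ⁻¹ (k + 2)) :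
    inversions (adjSwap k * σ) = insert (σ⁻¹ (k + 1), σ⁻¹ (k + 2)) (inversions σ) := by
  refine (inversions_adjSwap_mul_subset k σ).antisymm (Set.insert_subset ⟨h, ?_⟩ ?_)
  · simp
  · rintro ⟨a, b⟩ ⟨hab, hinv⟩
    refine ⟨hab, ?_⟩
    have ha : σ a = k + 2 → a = σ⁻¹ (k + 2) := fun h => Equiv.Perm.eq_inv_iff_eq.2 h
    have hb : σ b = k + 1 → b = σ⁻¹ (k + 1) := fun h => Equiv.Perm.eq_inv_iff_eq.2 h
    simp only [Equiv.Perm.mul_apply, adjSwap_apply]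
    grind

theorem finite_inversions_wordPerm (W : List ℕ) : (inversions (wordPerm W)).Finite := by
  induction W with
  | nil => exact inversions_one ▸ Set.finite_empty
  | cons k W ih =>
    rw [wordPerm_cons]
    exact (ih.insert _).subset (inversions_adjSwap_mul_subset k _)

theorem lenInv_adjSwap_mul (hfin : (inversions σ).Finite) (h : σ⁻¹ (k + 1) < σ⁻¹ (k + 2)) :
    lenInv (adjSwap k * σ) = lenInv σ + 1 := by
  change (inversions _).ncard = (inversions σ).ncard + 1
  rw [inversions_adjSwap_mul h, Set.ncard_insert_of_notMem _ hfin]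
  simp [inversions]

theorem lenInv_wordPerm_le (W : List ℕ) : lenInv (wordPerm W) ≤ W.length := by
  induction W with
  | nil => exact ((congrArg Set.ncard inversions_one).trans (Set.ncard_empty _)).le
  | cons k W ih =>
    calc (inversions (wordPerm (k :: W))).ncard
        ≤ (insert _ (inversions (wordPerm W))).ncard :=
          Set.ncard_le_ncard (wordPerm_cons k W ▸ inversions_adjSwap_mul_subset k _)
            ((finite_inversions_wordPerm W).insert _)
      _ ≤ (inversions (wordPerm W)).ncard + 1 := Set.ncard_insert_le _ _
      _ ≤ (k :: W).length := Nat.succ_le_succ ih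

theorem isReduced_nil : IsReduced [] := Nat.le_zero.1 (lenInv_wordPerm_le [])

theorem isReduced_cons :
    IsReduced (k :: W) ↔
      IsReduced W ∧ (wordPerm W)⁻¹ (k + 1) < (wordPerm W)⁻¹ (k + 2) := by
  simp only [IsReduced, wordPerm_cons, List.length_cons]
  have hfin := finite_inversions_wordPerm (k :: W)
  rw [wordPerm_cons] at hfin
  rcases lt_or_gt_of_ne (a := (wordPerm W)⁻¹ (k + 1)) (b := (wordPerm W)⁻¹ (k + 2)) (by simp)
    with hasc | hdesc
  · rw [lenInv_adjSwap_mul (finite_inversions_wordPerm W) hasc]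
    simp only [hasc, and_true, Nat.add_right_cancel_iff]
  · have hlen := lenInv_adjSwap_mul (k := k) hfin
      (by rwa [adjSwap_mul_inv_apply, adjSwap_mul_inv_apply, adjSwap_apply_left,
        adjSwap_apply_right])
    rw [← mul_assoc, adjSwap_mul_self, one_mul] at hlen
    have := lenInv_wordPerm_le W
    exact iff_of_false (by omega) fun h => h.2.not_gt hdesc

theorem IsReduced.descent (h : IsReduced (k :: W)) :
    (wordPerm (k :: W))⁻¹ (k + 2) < (wordPerm (k :: W))⁻¹ (k + 1) := by
  rw [wordPerm_cons, adjSwap_mul_inv_apply, adjSwap_mul_inv_apply, adjSwap_apply_left,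
    adjSwap_apply_right]
  exact (isReduced_cons.1 h).2

theorem IsReduced.of_append (h : IsReduced (V ++ W)) : IsReduced W := by
  induction V with
  | nil => exact h
  | cons k V ih => exact ih (isReduced_cons.1 h).1

end ReducedWords

section IncreasingWords

variable {k l : ℕ} {L W : List ℕ}

theorem wordPerm_range'_inv_apply (k l v : ℕ) :
    (wordPerm (List.range' k l))⁻¹ v =
      if v = k + 1 then k + l + 1 else if k + 1 < v ∧ v ≤ k + l + 1 then v - 1 else v := by
  induction l generalizing k v with
  | zero =>
    rw [List.range'_zero, wordPerm_nil, inv_one, Equiv.Perm.one_apply]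
    split_ifs <;> omega
  | succ l ih =>
    rw [List.range'_succ, wordPerm_cons, adjSwap_mul_inv_apply, ih, adjSwap_apply]
    split_ifs <;> omega

theorem strictMonoOn_inv_wordPerm_range'_append
    (h : StrictMonoOn ⇑(wordPerm W)⁻¹ (Set.Ici (k + 1))) :
    StrictMonoOn ⇑(wordPerm (List.range' k l ++ W))⁻¹ (Set.Ici (k + 2)) := by
  intro p hp q hq hpq
  rw [Set.mem_Ici] at hp hq
  simp only [wordPerm_append, mul_inv_rev, Equiv.Perm.mul_apply, wordPerm_range'_inv_apply]
  refine h (Set.mem_Ici.2 ?_) (Set.mem_Ici.2 ?_) ?_ <;> split_ifs <;> omega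

theorem isReduced_range'_append (hW : IsReduced W)
    (h : StrictMonoOn ⇑(wordPerm W)⁻¹ (Set.Ici (k + 1))) :
    IsReduced (List.range' k l ++ W) := by
  induction l generalizing k with
  | zero => exact hW
  | succ l ih =>
    rw [List.range'_succ, List.cons_append, isReduced_cons]
    refine ⟨ih (h.mono (Set.Ici_subset_Ici.2 (by omega))), ?_⟩
    simp only [wordPerm_append, mul_inv_rev, Equiv.Perm.mul_apply, wordPerm_range'_inv_apply]
    refine h (Set.mem_Ici.2 ?_) (Set.mem_Ici.2 ?_) ?_ <;> split_ifs <;> omega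

/- The first letter of a reduced word is a descent of its inverse permutation, so it can only be
`k`; cancelling it moves the monotone range up by one. -/
theorem eq_range'_of_isReduced_append (hL : L.Pairwise (· < ·)) (hk : ∀ a ∈ L, k ≤ a)
    (hred : IsReduced (L ++ W))
    (hmono : StrictMonoOn ⇑(wordPerm (L ++ W))⁻¹ (Set.Ici (k + 2))) :
    L = List.range' k L.length := by
  induction L generalizing k with
  | nil => rfl
  | cons a L ih =>
    rw [List.pairwise_cons] at hL
    obtain rfl : a = k := by
      by_contra hne
      have := hk a List.mem_cons_self
      exact (hmono (a := a + 1) (b := a + 2) (by simp; omega) (by simp; omega)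
        (by omega)).not_gt hred.descent
    rw [List.length_cons, List.range'_succ]
    congr 1
    refine ih hL.2 hL.1 (isReduced_cons.1 hred).1 fun p hp q hq hpq => ?_
    rw [Set.mem_Ici] at hp hq
    have := hmono (a := p) (b := q) (by simp; omega) (by simp; omega) hpq
    rw [List.cons_append, wordPerm_cons, adjSwap_mul_inv_apply, adjSwap_mul_inv_apply,
      adjSwap_apply, adjSwap_apply] at this
    simpa (disch := omega) only [if_neg] using this

theorem wordPerm_apply_le_of_pairwise_lt (hL : L.Pairwise (· < ·)) (v : ℕ) :
    wordPerm L v ≤ v + 1 ∧ (wordPerm L v = v + 1 → ∃ k ∈ L, v = k + 1) := by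
  induction L with
  | nil => simp
  | cons a L ih =>
    rw [List.pairwise_cons] at hL
    specialize ih hL.2
    rw [wordPerm_cons, Equiv.Perm.mul_apply, adjSwap_apply, List.exists_mem_cons_iff]
    have hfix : ∀ b ≤ a + 1, wordPerm L b = b := fun b hb =>
      wordPerm_apply_of_forall_ne fun k hk => by have := hL.1 k hk; omega
    have hinj : wordPerm L v = a + 1 → v = a + 1 := fun h =>
      (wordPerm L).injective (h.trans (hfix _ le_rfl).symm)
    by_cases hv : v ≤ a + 1
    · have := hfix v hv
      split_ifs <;> grind
    · split_ifs <;> grind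

end IncreasingWords

section Deletion

/-- The increasing enumeration of the natural numbers other than `p`. -/
def skip (p v : ℕ) : ℕ := if v < p then v else v + 1

/-- `τ` is obtained from `σ` by erasing the value `q` at position `p` from the one-line notation
and closing the gaps in positions and values. -/
def IsDeletion (p q : ℕ) (σ τ : Equiv.Perm ℕ) : Prop := ∀ v, σ (skip p v) = skip q (τ v)

variable {k p q r v : ℕ} {σ σ' τ τ' : Equiv.Perm ℕ} {W : List ℕ}

theorem skip_of_lt (h : v < p) : skip p v = v := if_pos h

theorem skip_of_le (h : p ≤ v) : skip p v = v + 1 := if_neg h.not_gt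

theorem skip_strictMono (p : ℕ) : StrictMono (skip p) := fun v w h => by
  unfold skip
  split_ifs <;> omega

theorem skip_ne (p v : ℕ) : skip p v ≠ p := by
  unfold skip
  split_ifs <;> omega

theorem exists_skip_eq (h : v ≠ p) : ∃ u, skip p u = v := by
  rcases h.lt_or_gt with h | h
  · exact ⟨v, skip_of_lt h⟩
  · exact ⟨v - 1, by rw [skip_of_le (by omega)]; omega⟩

theorem IsDeletion.mul (h' : IsDeletion q r σ' τ') (h : IsDeletion p q σ τ) :
    IsDeletion p r (σ' * σ) (τ' * τ) := fun v => by
  rw [Equiv.Perm.mul_apply, h, h', Equiv.Perm.mul_apply]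

theorem IsDeletion.apply_eq (h : IsDeletion p q σ τ) : σ p = q := by
  obtain ⟨v, rfl⟩ := σ.surjective q
  by_contra hv
  obtain ⟨u, rfl⟩ := exists_skip_eq (p := p) fun hp : v = p => hv (hp ▸ rfl)
  exact skip_ne _ _ (h u).symm

theorem IsDeletion.eq_iff (h : IsDeletion p q σ τ) (h' : IsDeletion p q σ' τ') :
    σ = σ' ↔ τ = τ' := by
  constructor
  · rintro rfl
    exact Equiv.ext fun v => (skip_strictMono q).injective ((h v).symm.trans (h' v))
  · rintro rfl
    refine Equiv.ext fun v => ?_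
    by_cases hv : v = p
    · rw [hv, h.apply_eq, h'.apply_eq]
    · obtain ⟨u, rfl⟩ := exists_skip_eq hv
      rw [h, h']

theorem isDeletion_one (p : ℕ) : IsDeletion p p 1 1 := fun _ => rfl

theorem isDeletion_adjSwap (k : ℕ) : IsDeletion (k + 1) (k + 2) (adjSwap k) 1 := fun v => by
  rw [adjSwap_apply, Equiv.Perm.one_apply]
  unfold skip
  split_ifs <;> omega

theorem isDeletion_wordPerm_of_lt (h : ∀ k ∈ W, k + 2 < p) :
    IsDeletion p p (wordPerm W) (wordPerm W) := by
  induction W with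
  | nil => exact isDeletion_one p
  | cons k W ih =>
    rw [List.forall_mem_cons] at h
    rw [wordPerm_cons]
    refine IsDeletion.mul (fun v => ?_) (ih h.2)
    have := h.1
    rw [adjSwap_apply, adjSwap_apply]
    unfold skip
    split_ifs <;> omega

theorem isDeletion_wordPerm_map_succ (h : ∀ k ∈ W, p ≤ k + 1) :
    IsDeletion p p (wordPerm (W.map (· + 1))) (wordPerm W) := by
  induction W with
  | nil => exact isDeletion_one p
  | cons k W ih =>
    rw [List.forall_mem_cons] at h
    rw [List.map_cons, wordPerm_cons, wordPerm_cons]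
    refine IsDeletion.mul (fun v => ?_) (ih h.2)
    have := h.1
    rw [adjSwap_apply, adjSwap_apply]
    unfold skip
    split_ifs <;> omega

end Deletion

section Rows

/-- The word read along a row with abscissae `0, …, m - 1` whose crosses have abscissae `S`, the
leftmost point carrying the letter `k`. -/
noncomputable def rowWord (S : Set ℕ) (m k : ℕ) : List ℕ :=
  ((List.range m).filter (· ∈ S)).map (· + k)

variable {a k m x U : ℕ} {S S' : Set ℕ}

theorem mem_rowWord : a ∈ rowWord S m k ↔ ∃ x < m, x ∈ S ∧ x + k = a := by
  simp [rowWord, and_assoc]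

theorem rowWord_congr (h : ∀ x < m, x ∈ S ↔ x ∈ S') : rowWord S m k = rowWord S' m k :=
  congrArg (List.map _) (List.filter_congr fun x hx => by simp [h x (List.mem_range.1 hx)])

theorem pairwise_lt_rowWord (S : Set ℕ) (m k : ℕ) : (rowWord S m k).Pairwise (· < ·) :=
  (List.pairwise_lt_range.filter _).map _ fun _ _ h => Nat.add_lt_add_right h k

theorem rowWord_add (S : Set ℕ) (m r k : ℕ) :
    rowWord S (m + r) k = rowWord S m k ++ rowWord {x | m + x ∈ S} r (m + k) := by
  simp [rowWord, List.range_add, List.filter_map, Function.comp_def, Nat.add_left_comm,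
    Nat.add_comm]

theorem rowWord_succ_of_mem (h : m ∈ S) : rowWord S (m + 1) k = rowWord S m k ++ [m + k] := by
  simp [rowWord, List.range_succ, h]

theorem rowWord_succ_of_notMem (h : m ∉ S) : rowWord S (m + 1) k = rowWord S m k := by
  simp [rowWord, List.range_succ, h]

theorem wordPerm_rowWord_apply_le (S : Set ℕ) (m k v : ℕ) :
    wordPerm (rowWord S m k) v ≤ v + 1 :=
  (wordPerm_apply_le_of_pairwise_lt (pairwise_lt_rowWord S m k) v).1

theorem mem_of_wordPerm_rowWord_apply (h : wordPerm (rowWord S m k) (x + k + 1) = x + k + 2) :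
    x ∈ S := by
  obtain ⟨a, ha, hxa⟩ := (wordPerm_apply_le_of_pairwise_lt (pairwise_lt_rowWord S m k) _).2 h
  obtain ⟨x', -, hx', rfl⟩ := mem_rowWord.1 ha
  obtain rfl : x = x' := by omega
  exact hx'

theorem map_succ_rowWord (S : Set ℕ) (m k : ℕ) :
    (rowWord S m k).map (· + 1) = rowWord S m (k + 1) := by
  simp [rowWord]

theorem rowWord_succ_eq_append (h : U ∈ S) (hm : U ≤ m) (k : ℕ) :
    rowWord S (m + 1) k = rowWord S U k ++ [U + k] ++
      (rowWord {x | U + 1 + x ∈ S} (m - U) (U + k)).map (· + 1) := by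
  rw [map_succ_rowWord, Nat.add_right_comm, ← rowWord_succ_of_mem h, ← rowWord_add]
  congr 1
  omega

theorem rowWord_preimage_skip (S : Set ℕ) (hm : U ≤ m) (k : ℕ) :
    rowWord (skip U ⁻¹' S) m k =
      rowWord S U k ++ rowWord {x | U + 1 + x ∈ S} (m - U) (U + k) := by
  obtain ⟨r, rfl⟩ := Nat.exists_eq_add_of_le hm
  rw [rowWord_add, Nat.add_sub_cancel_left]
  congr 1
  · exact rowWord_congr fun x hx => by rw [Set.mem_preimage, skip_of_lt hx]
  · exact rowWord_congr fun x _ => by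
      rw [Set.mem_ofPred_eq, Set.mem_preimage, skip_of_le (Nat.le_add_right U x),
        Set.mem_ofPred_eq, Nat.add_right_comm]

theorem isDeletion_wordPerm_rowWord (h : U ∈ S) (hU : 0 < U) (hm : U ≤ m) (k : ℕ) :
    IsDeletion (U + k + 1) (U + k + 2) (wordPerm (rowWord S (m + 1) k))
      (wordPerm (rowWord (skip U ⁻¹' S) (m - 1 + 1) k)) := by
  rw [Nat.sub_add_cancel (hU.trans_le hm), rowWord_preimage_skip S hm, rowWord_succ_eq_append h hm,
    wordPerm_append, wordPerm_append, wordPerm_append, wordPerm_cons, wordPerm_nil, mul_one,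
    ← mul_one (wordPerm (rowWord S U k))]
  have hleft := isDeletion_wordPerm_of_lt (p := U + k + 2) (W := rowWord S U k) fun a ha => by
    obtain ⟨x, hx, -, rfl⟩ := mem_rowWord.1 ha
    omega
  have hright := isDeletion_wordPerm_map_succ (p := U + k + 1)
    (W := rowWord {x | U + 1 + x ∈ S} (m - U) (U + k)) fun a ha => by
      obtain ⟨x, -, -, rfl⟩ := mem_rowWord.1 ha
      omega
  exact (hleft.mul (isDeletion_adjSwap (U + k))).mul hright

theorem length_rowWord_of_mem (h : U ∈ S) (hU : 0 < U) (hm : U ≤ m) (k : ℕ) :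
    (rowWord S (m + 1) k).length = (rowWord (skip U ⁻¹' S) (m - 1 + 1) k).length + 1 := by
  rw [Nat.sub_add_cancel (hU.trans_le hm), rowWord_preimage_skip S hm, rowWord_succ_eq_append h hm]
  simp only [List.length_append, List.length_map, List.length_singleton]
  omega

end Rows

section CrossWords

/-- The points of the diagram whose rows are at heights `0, …, n`, the row at height `y` having
abscissae `0, …, w y`. -/
def staircase (w : ℕ → ℕ) (n : ℕ) : Set (ℕ × ℕ) := {p | p.1 ≤ w p.2 ∧ p.2 ≤ n}

/-- The letters of the points of `C ∩ staircase w n` in reading order. -/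
noncomputable def crossWord (w : ℕ → ℕ) (n : ℕ) (C : Set (ℕ × ℕ)) : List ℕ :=
  (List.range (n + 1)).flatMap fun y => rowWord {x | (x, y) ∈ C} (w y + 1) (n - y)

/-- The diagram above the bottom row. -/
def dropRow (C : Set (ℕ × ℕ)) : Set (ℕ × ℕ) := {p | (p.1, p.2 + 1) ∈ C}

/-- The diagram left after removing column `U` and closing the gap. -/
def dropCol (U : ℕ) (C : Set (ℕ × ℕ)) : Set (ℕ × ℕ) := {p | (skip U p.1, p.2) ∈ C}

variable {a b k m n x y U : ℕ} {w : ℕ → ℕ} {S : Set ℕ} {C : Set (ℕ × ℕ)}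

theorem rowWord_eq_range' (h : ∀ x < m, x ∈ S ↔ a ≤ x ∧ x < b) (hb : b ≤ m) :
    rowWord S m k = List.range' (a + k) (b - a) := by
  refine (pairwise_lt_rowWord S m k).eq_of_mem_iff List.pairwise_lt_range' fun c => ?_
  rw [mem_rowWord, List.mem_range'_1]
  constructor
  · rintro ⟨x, hx, hS, rfl⟩
    have := (h x hx).1 hS
    omega
  · intro hc
    exact ⟨c - k, by omega, (h _ (by omega)).2 (by omega), by omega⟩

theorem crossWord_congr {D : Set (ℕ × ℕ)} (h : ∀ p ∈ staircase w n, p ∈ C ↔ p ∈ D) :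
    crossWord w n C = crossWord w n D :=
  List.flatMap_congr fun y hy => rowWord_congr fun x hx =>
    h (x, y) ⟨Nat.le_of_lt_succ hx, Nat.le_of_lt_succ (List.mem_range.1 hy)⟩

theorem crossWord_zero (w : ℕ → ℕ) (C : Set (ℕ × ℕ)) :
    crossWord w 0 C = rowWord {x | (x, 0) ∈ C} (w 0 + 1) 0 := by
  simp [crossWord]

theorem crossWord_succ (w : ℕ → ℕ) (n : ℕ) (C : Set (ℕ × ℕ)) :
    crossWord w (n + 1) C =
      rowWord {x | (x, 0) ∈ C} (w 0 + 1) (n + 1) ++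
        crossWord (fun y => w (y + 1)) n (dropRow C) := by
  simp [crossWord, dropRow, List.range_succ_eq_map (n := n + 1), List.flatMap_map]

theorem isDeletion_wordPerm_crossWord (hU : 0 < U) (hle : ∀ y ≤ n, U ≤ w y)
    (hC : ∀ y ≤ n, (U, y) ∈ C) :
    IsDeletion (U + 1) (U + n + 2) (wordPerm (crossWord w n C))
      (wordPerm (crossWord (fun y => w y - 1) n (dropCol U C))) := by
  induction n generalizing w C with
  | zero =>
    rw [crossWord_zero, crossWord_zero]
    exact isDeletion_wordPerm_rowWord (hC 0 le_rfl) hU (hle 0 le_rfl) 0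
  | succ n ih =>
    rw [crossWord_succ, crossWord_succ, wordPerm_append, wordPerm_append]
    exact (isDeletion_wordPerm_rowWord (hC 0 n.succ.zero_le) hU (hle 0 n.succ.zero_le) (n + 1)).mul
      (ih (w := fun y => w (y + 1)) (C := dropRow C) (fun y hy => hle _ (Nat.succ_le_succ hy))
        fun y hy => hC _ (Nat.succ_le_succ hy))

theorem length_crossWord_of_column (hU : 0 < U) (hle : ∀ y ≤ n, U ≤ w y)
    (hC : ∀ y ≤ n, (U, y) ∈ C) :
    (crossWord w n C).length =
      (crossWord (fun y => w y - 1) n (dropCol U C)).length + (n + 1) := by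
  have hrow : ∀ y ≤ n, (rowWord {x | (x, y) ∈ C} (w y + 1) (n - y)).length =
      (rowWord {x | (x, y) ∈ dropCol U C} (w y - 1 + 1) (n - y)).length + 1 := fun y hy =>
    length_rowWord_of_mem (hC y hy) hU (hle y hy) (n - y)
  rw [crossWord, crossWord, List.length_flatMap, List.length_flatMap,
    List.map_congr_left fun y hy => hrow y (Nat.le_of_lt_succ (List.mem_range.1 hy)),
    List.sum_map_add]
  simp

theorem wordPerm_crossWord_apply_le (w : ℕ → ℕ) (n : ℕ) (C : Set (ℕ × ℕ)) (v : ℕ) :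
    wordPerm (crossWord w n C) v ≤ v + n + 1 := by
  induction n generalizing w C with
  | zero =>
    rw [crossWord_zero]
    exact wordPerm_rowWord_apply_le _ _ _ v
  | succ n ih =>
    rw [crossWord_succ, wordPerm_append, Equiv.Perm.mul_apply]
    exact (wordPerm_rowWord_apply_le _ _ _ _).trans (Nat.succ_le_succ (ih _ _))

theorem mem_of_wordPerm_crossWord_apply (h : wordPerm (crossWord w n C) (x + 1) = x + n + 2)
    (hy : y ≤ n) : (x, y) ∈ C := by
  induction n generalizing w C y with
  | zero =>
    obtain rfl := Nat.le_zero.1 hy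
    rw [crossWord_zero] at h
    exact mem_of_wordPerm_rowWord_apply h
  | succ n ih =>
    rw [crossWord_succ, wordPerm_append, Equiv.Perm.mul_apply] at h
    have hupper : wordPerm (crossWord (fun y => w (y + 1)) n (dropRow C)) (x + 1) = x + n + 2 := by
      have hle := wordPerm_crossWord_apply_le (fun y => w (y + 1)) n (dropRow C) (x + 1)
      have hge := h.ge.trans (wordPerm_rowWord_apply_le _ _ _ _)
      omega
    cases y with
    | zero => exact mem_of_wordPerm_rowWord_apply (hupper ▸ h)
    | succ y => exact ih (C := dropRow C) hupper (Nat.le_of_succ_le_succ hy)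

end CrossWords

section ReducedPipeDreams

/-- The increasing runs spelled by the minimal diagram `minCrosses w`: the run from the row at
height `y + 1` starts with the letter `n - y` and has length `w y`. -/
def dominantWord (w : ℕ → ℕ) (n : ℕ) : List ℕ :=
  (List.range n).flatMap fun y => List.range' (n - y) (w y)

/-- The complement of the minimal tree, in the diagram of unbounded height. -/
def minCrosses (w : ℕ → ℕ) : Set (ℕ × ℕ) := {p | 1 ≤ p.1 ∧ 1 ≤ p.2 ∧ p.1 ≤ w (p.2 - 1)}

/-- The crosses `C` spell a reduced word of the permutation of `dominantWord w n`. -/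
def IsReducedPipeDream (w : ℕ → ℕ) (n : ℕ) (C : Set (ℕ × ℕ)) : Prop :=
  wordPerm (crossWord w n C) = wordPerm (dominantWord w n) ∧
    (crossWord w n C).length = (dominantWord w n).length

/-- The crosses of the bottom row are all its points but the last one. -/
def BottomRowFull (w : ℕ → ℕ) (C : Set (ℕ × ℕ)) : Prop := ∀ x ≤ w 0, (x, 0) ∈ C ↔ x < w 0

/-- The last two points of the bottom row are not crosses, and all points above its last point
are. -/
structure LastColumnFull (w : ℕ → ℕ) (n : ℕ) (C : Set (ℕ × ℕ)) : Prop where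
  pos : 0 < w 0
  penultimate : (w 0 - 1, 0) ∉ C
  last : (w 0, 0) ∉ C
  column : ∀ y ≤ n, (w 0, y + 1) ∈ C

variable {n : ℕ} {w : ℕ → ℕ} {C : Set (ℕ × ℕ)}

theorem monotone_dropRow (hw : Monotone w) : Monotone fun y => w (y + 1) :=
  fun _ _ h => hw (Nat.succ_le_succ h)

theorem monotone_dropCol (hw : Monotone w) : Monotone fun y => w y - 1 :=
  fun _ _ h => Nat.sub_le_sub_right (hw h) 1

theorem dominantWord_succ (w : ℕ → ℕ) (n : ℕ) :
    dominantWord w (n + 1) =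
      List.range' (n + 1) (w 0) ++ dominantWord (fun y => w (y + 1)) n := by
  simp [dominantWord, List.range_succ_eq_map, List.flatMap_map]

theorem strictMonoOn_inv_wordPerm_dominantWord (w : ℕ → ℕ) (n : ℕ) :
    StrictMonoOn ⇑(wordPerm (dominantWord w n))⁻¹ (Set.Ici (n + 2)) := by
  induction n generalizing w with
  | zero => exact fun _ _ _ _ h => h
  | succ n ih =>
    rw [dominantWord_succ]
    exact strictMonoOn_inv_wordPerm_range'_append (ih _)

theorem isReduced_dominantWord (w : ℕ → ℕ) (n : ℕ) : IsReduced (dominantWord w n) := by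
  induction n generalizing w with
  | zero => exact isReduced_nil
  | succ n ih =>
    rw [dominantWord_succ]
    exact isReduced_range'_append (ih _) (strictMonoOn_inv_wordPerm_dominantWord _ n)

theorem crossWord_minCrosses (hw : Monotone w) (n : ℕ) :
    crossWord w n (minCrosses w) = dominantWord w n := by
  have hbottom : rowWord {x | (x, 0) ∈ minCrosses w} (w 0 + 1) n = [] :=
    rowWord_eq_range' (a := 0) (b := 0) (by simp [minCrosses]) (Nat.zero_le _)
  have hrow (y : ℕ) : rowWord {x | (x, y + 1) ∈ minCrosses w} (w (y + 1) + 1) (n - (y + 1)) =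
      List.range' (1 + (n - (y + 1))) (w y + 1 - 1) :=
    rowWord_eq_range' (by simp [minCrosses])
      (Nat.succ_le_succ (hw (Nat.le_succ y)))
  rw [crossWord, List.range_succ_eq_map, List.flatMap_cons, List.flatMap_map, dominantWord,
    Nat.sub_zero, hbottom, List.nil_append]
  refine List.flatMap_congr fun y hy => ?_
  rw [List.mem_range] at hy
  rw [hrow, Nat.add_sub_cancel]
  congr 1
  omega

theorem dropCol_minCrosses (hw : Monotone w) (h : 0 < w 0) :
    dropCol (w 0) (minCrosses w) = minCrosses fun y => w y - 1 := by
  ext ⟨x, y⟩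
  have := hw (y - 1).zero_le
  simp only [dropCol, minCrosses, Set.mem_ofPred_eq, skip]
  split_ifs <;> omega

theorem lastColumnFull_minCrosses (hw : Monotone w) (h : 0 < w 0) (n : ℕ) :
    LastColumnFull w n (minCrosses w) where
  pos := h
  penultimate := fun h => Nat.not_succ_le_zero 0 h.2.1
  last := fun h => Nat.not_succ_le_zero 0 h.2.1
  column := fun y _ => ⟨h, Nat.succ_pos y, hw y.zero_le⟩

theorem LastColumnFull.rowWord_dropCol (h : LastColumnFull w n C) (k : ℕ) :
    rowWord {x | (x, 0) ∈ dropCol (w 0) C} (w 0 - 1 + 1) k =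
      rowWord {x | (x, 0) ∈ C} (w 0 + 1) k := by
  rw [Nat.sub_add_cancel h.pos, rowWord_succ_of_notMem (m := w 0) h.last]
  exact rowWord_congr fun x hx => by
    rw [Set.mem_ofPred_eq, dropCol, Set.mem_ofPred_eq, skip_of_lt hx, Set.mem_ofPred_eq]

theorem LastColumnFull.isDeletion_wordPerm (h : LastColumnFull w n C) (hw : Monotone w) :
    IsDeletion (w 0 + 1) (w 0 + n + 2) (wordPerm (crossWord w (n + 1) C))
      (wordPerm (crossWord (fun y => w y - 1) (n + 1) (dropCol (w 0) C))) := by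
  rw [crossWord_succ, crossWord_succ, wordPerm_append, wordPerm_append, h.rowWord_dropCol]
  refine (isDeletion_wordPerm_of_lt fun a ha => ?_).mul
    (isDeletion_wordPerm_crossWord h.pos (fun y _ => hw (y + 1).zero_le) h.column)
  obtain ⟨x, hx, hxC, rfl⟩ := mem_rowWord.1 ha
  have hlast : x ≠ w 0 := fun hx => h.last (hx ▸ hxC)
  have hpenultimate : x ≠ w 0 - 1 := fun hx => h.penultimate (hx ▸ hxC)
  omega

theorem LastColumnFull.length_crossWord (h : LastColumnFull w n C) (hw : Monotone w) :
    (crossWord w (n + 1) C).length =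
      (crossWord (fun y => w y - 1) (n + 1) (dropCol (w 0) C)).length + (n + 1) := by
  rw [crossWord_succ, crossWord_succ, List.length_append, List.length_append, h.rowWord_dropCol,
    length_crossWord_of_column h.pos (fun y _ => hw (y + 1).zero_le) h.column, Nat.add_assoc]
  rfl

theorem isReducedPipeDream_zero : IsReducedPipeDream w 0 C ↔ ∀ x ≤ w 0, (x, 0) ∉ C := by
  have hmem : crossWord w 0 C = [] ↔ ∀ x ≤ w 0, (x, 0) ∉ C := by
    simp [crossWord_zero, rowWord]
  rw [← hmem]
  exact ⟨fun h => List.eq_nil_of_length_eq_zero h.2, fun h => ⟨congrArg _ h, congrArg _ h⟩⟩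

theorem BottomRowFull.isReducedPipeDream_iff (h : BottomRowFull w C) :
    IsReducedPipeDream w (n + 1) C ↔
      IsReducedPipeDream (fun y => w (y + 1)) n (dropRow C) := by
  have hrow : rowWord {x | (x, 0) ∈ C} (w 0 + 1) (n + 1) = List.range' (0 + (n + 1)) (w 0 - 0) :=
    rowWord_eq_range' (fun x hx => by simpa using h x (Nat.le_of_lt_succ hx)) (Nat.le_succ _)
  rw [Nat.zero_add, Nat.sub_zero] at hrow
  rw [IsReducedPipeDream, crossWord_succ, dominantWord_succ, hrow, wordPerm_append,
    wordPerm_append, mul_right_inj, List.length_append, List.length_append, Nat.add_left_cancel_iff,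
    IsReducedPipeDream]

theorem LastColumnFull.isReducedPipeDream_iff (h : LastColumnFull w n C) (hw : Monotone w) :
    IsReducedPipeDream w (n + 1) C ↔
      IsReducedPipeDream (fun y => w y - 1) (n + 1) (dropCol (w 0) C) := by
  have hmin := lastColumnFull_minCrosses hw h.pos n
  rw [IsReducedPipeDream, IsReducedPipeDream, ← crossWord_minCrosses hw,
    ← crossWord_minCrosses (monotone_dropCol hw), ← dropCol_minCrosses hw h.pos,
    (h.isDeletion_wordPerm hw).eq_iff (hmin.isDeletion_wordPerm hw), h.length_crossWord hw,
    hmin.length_crossWord hw, Nat.add_right_cancel_iff]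

theorem IsReducedPipeDream.isReduced (h : IsReducedPipeDream w n C) :
    IsReduced (crossWord w n C) := by
  rw [IsReduced, h.1, h.2]
  exact isReduced_dominantWord w n

theorem IsReducedPipeDream.exists_bottomRow (h : IsReducedPipeDream w (n + 1) C) :
    ∃ j, ∀ x ≤ w 0, (x, 0) ∈ C ↔ x < j := by
  have hred := h.isReduced
  have hmono := strictMonoOn_inv_wordPerm_dominantWord w (n + 1)
  rw [← h.1] at hmono
  rw [crossWord_succ] at hred hmono
  have hge : ∀ a ∈ rowWord {x | (x, 0) ∈ C} (w 0 + 1) (n + 1), n + 1 ≤ a := fun a ha => by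
    obtain ⟨x, -, -, rfl⟩ := mem_rowWord.1 ha
    exact Nat.le_add_left _ _
  have hrow := eq_range'_of_isReduced_append (pairwise_lt_rowWord _ _ _) hge hred hmono
  refine ⟨(rowWord {x | (x, 0) ∈ C} (w 0 + 1) (n + 1)).length, fun x hx => ?_⟩
  have hmem : x + (n + 1) ∈ rowWord {x | (x, 0) ∈ C} (w 0 + 1) (n + 1) ↔ (x, 0) ∈ C := by
    rw [mem_rowWord]
    exact ⟨fun ⟨x', _, hC, heq⟩ => Nat.add_right_cancel heq ▸ hC,
      fun hC => ⟨x, Nat.lt_succ_of_le hx, hC, rfl⟩⟩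
  rw [← hmem, hrow, List.mem_range'_1, List.length_range']
  omega

/- If the whole bottom row consisted of crosses, cancelling all but the last of them would leave a
reduced word whose first letter is a descent, although its inverse increases there. -/
theorem IsReducedPipeDream.last_notMem (h : IsReducedPipeDream w (n + 1) C) : (w 0, 0) ∉ C := by
  intro hlast
  obtain ⟨j, hj⟩ := h.exists_bottomRow
  have hrow : rowWord {x | (x, 0) ∈ C} (w 0 + 1) (n + 1) =
      List.range' (0 + (n + 1)) (w 0 + 1 - 0) :=
    rowWord_eq_range' (fun x hx => iff_of_true ((hj x (Nat.le_of_lt_succ hx)).2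
      ((Nat.le_of_lt_succ hx).trans_lt ((hj _ le_rfl).1 hlast))) ⟨x.zero_le, hx⟩) le_rfl
  rw [Nat.zero_add, Nat.sub_zero, List.range'_concat, Nat.one_mul] at hrow
  have hred := h.isReduced
  have hperm := h.1
  rw [crossWord_succ, hrow, List.append_assoc, List.singleton_append] at hred hperm
  rw [dominantWord_succ, wordPerm_append (List.range' _ _), wordPerm_append (List.range' _ _),
    mul_right_inj] at hperm
  have hdesc := hred.of_append.descent
  rw [hperm] at hdesc
  have hasc := strictMonoOn_inv_wordPerm_dominantWord (fun y => w (y + 1)) n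
    (a := n + 1 + w 0 + 1) (b := n + 1 + w 0 + 2) (Set.mem_Ici.2 (by omega))
    (Set.mem_Ici.2 (by omega)) (Nat.lt_succ_self _)
  exact hasc.not_gt hdesc

/- The bottom row fixes the image of `w 0 + 1`, so the rows above raise it as far as they can. -/
theorem IsReducedPipeDream.lastColumnFull (h : IsReducedPipeDream w (n + 1) C)
    (hw : Monotone w) (hpos : 0 < w 0) (hpen : (w 0 - 1, 0) ∉ C) : LastColumnFull w n C where
  pos := hpos
  penultimate := hpen
  last := h.last_notMem
  column := fun y hy => by
    obtain ⟨j, hj⟩ := h.exists_bottomRow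
    have hjw := mt (hj (w 0 - 1) (Nat.sub_le _ _)).2 hpen
    have himage : wordPerm (crossWord w (n + 1) C) (w 0 + 1) = w 0 + n + 2 := by
      rw [h.1, ← crossWord_minCrosses hw]
      exact ((lastColumnFull_minCrosses hw hpos n).isDeletion_wordPerm hw).apply_eq
    have hfix : wordPerm (rowWord {x | (x, 0) ∈ C} (w 0 + 1) (n + 1)) (w 0 + n + 2) =
        w 0 + n + 2 := wordPerm_apply_of_forall_ne fun a ha => by
      obtain ⟨x, hx, hxC, rfl⟩ := mem_rowWord.1 ha
      have := (hj x (Nat.le_of_lt_succ hx)).1 hxC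
      omega
    rw [crossWord_succ, wordPerm_append, Equiv.Perm.mul_apply] at himage
    exact mem_of_wordPerm_crossWord_apply (C := dropRow C)
      (Equiv.injective _ (himage.trans hfix.symm)) hy

theorem IsReducedPipeDream.bottomRowFull_or_lastColumnFull (h : IsReducedPipeDream w (n + 1) C)
    (hw : Monotone w) : BottomRowFull w C ∨ LastColumnFull w n C := by
  by_cases hfull : 0 < w 0 ∧ (w 0 - 1, 0) ∉ C
  · exact Or.inr (h.lastColumnFull hw hfull.1 hfull.2)
  · obtain ⟨j, hj⟩ := h.exists_bottomRow
    have hlast := mt (hj (w 0) le_rfl).2 h.last_notMem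
    have hpen : 0 < w 0 → w 0 - 1 < j := fun hpos =>
      (hj _ (Nat.sub_le _ _)).1 (not_not.1 fun hpen => hfull ⟨hpos, hpen⟩)
    exact Or.inl fun x hx => (hj x hx).trans (by omega)

end ReducedPipeDreams

section Trees

/-- Incompatibility of two points of the diagram with row widths `w`. -/
def Conflict (w : ℕ → ℕ) (p q : ℕ × ℕ) : Prop :=
  (p.1 < q.1 ∧ p.2 < q.2 ∧ q.1 ≤ w p.2) ∨ (q.1 < p.1 ∧ q.2 < p.2 ∧ p.1 ≤ w q.2)

/-- The complement of `C` is a maximal set of pairwise compatible points. -/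
def IsTreeComplement (w : ℕ → ℕ) (n : ℕ) (C : Set (ℕ × ℕ)) : Prop :=
  ∀ p ∈ staircase w n, p ∈ C ↔ ∃ q ∈ staircase w n \ C, Conflict w p q

variable {n x y x' y' U : ℕ} {w : ℕ → ℕ} {p q : ℕ × ℕ} {C : Set (ℕ × ℕ)}

theorem skip_le_iff {a U v : ℕ} (h0 : 0 < U) (h : U ≤ a) : skip U v ≤ a ↔ v ≤ a - 1 := by
  unfold skip
  split_ifs <;> omega

theorem conflict_skip_iff (h0 : 0 < U) (h : ∀ y, U ≤ w y) :
    Conflict w (skip U x, y) (skip U x', y') ↔ Conflict (fun y => w y - 1) (x, y) (x', y') := by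
  simp only [Conflict, (skip_strictMono U).lt_iff_lt, skip_le_iff h0 (h _)]

theorem conflict_comm : Conflict w p q ↔ Conflict w q p := or_comm

theorem not_conflict_last (w : ℕ → ℕ) (q : ℕ × ℕ) : ¬ Conflict w (w 0, 0) q := by
  rintro (h | h)
  · exact h.2.2.not_gt h.1
  · exact Nat.not_lt_zero _ h.2.1

theorem IsTreeComplement.last_notMem (h : IsTreeComplement w n C) : (w 0, 0) ∉ C := fun hC =>
  have ⟨q, _, hq⟩ := (h (w 0, 0) ⟨le_rfl, n.zero_le⟩).1 hC
  not_conflict_last w q hq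

theorem isTreeComplement_zero : IsTreeComplement w 0 C ↔ ∀ x ≤ w 0, (x, 0) ∉ C := by
  have hrow : ∀ p ∈ staircase w 0, ¬ ∃ q ∈ staircase w 0 \ C, Conflict w p q := by
    rintro p ⟨-, hp⟩ ⟨q, ⟨⟨-, hq⟩, -⟩, hpq | hpq⟩
    · exact (hpq.2.1.trans_le hq).not_ge p.2.zero_le
    · exact (hpq.2.1.trans_le hp).not_ge q.2.zero_le
  refine (forall₂_congr fun p hp => iff_false_right (hrow p hp)).trans ⟨fun h x hx => ?_, ?_⟩
  · exact h (x, 0) ⟨hx, le_rfl⟩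
  · rintro h ⟨x, y⟩ ⟨hx, hy⟩
    obtain rfl := Nat.le_zero.1 hy
    exact h x hx

theorem IsTreeComplement.bottomRowFull_or_lastColumnFull (h : IsTreeComplement w (n + 1) C)
    (hw : Monotone w) : BottomRowFull w C ∨ LastColumnFull w n C := by
  by_cases hpen : 0 < w 0 ∧ (w 0 - 1, 0) ∉ C
  · refine Or.inr ⟨hpen.1, hpen.2, h.last_notMem, fun y hy => ?_⟩
    exact (h (w 0, y + 1) ⟨hw (Nat.zero_le _), Nat.succ_le_succ hy⟩).2
      ⟨(w 0 - 1, 0), ⟨⟨Nat.sub_le _ _, Nat.zero_le _⟩, hpen.2⟩,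
        Or.inr ⟨Nat.sub_lt hpen.1 one_pos, y.succ_pos, le_rfl⟩⟩
  · refine Or.inl fun x hx => ⟨fun hC => hx.lt_of_ne fun heq => h.last_notMem (heq ▸ hC),
      fun hlt => ?_⟩
    rw [not_and_not_right] at hpen
    obtain ⟨q, hq, hconf | hconf⟩ := (h (w 0 - 1, 0) ⟨Nat.sub_le _ _, Nat.zero_le _⟩).1
      (hpen (Nat.zero_lt_of_lt hlt))
    · exact (h (x, 0) ⟨hx, Nat.zero_le _⟩).2
        ⟨q, hq, Or.inl ⟨by have := hconf.1; omega, hconf.2.1, hconf.2.2⟩⟩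
    · exact absurd hconf.2.1 (Nat.not_lt_zero _)

theorem BottomRowFull.exists_conflict_iff (h : BottomRowFull w C) :
    (∃ q ∈ staircase w (n + 1) \ C, Conflict w (x, y + 1) q) ↔
      ∃ q ∈ staircase (fun y => w (y + 1)) n \ dropRow C,
        Conflict (fun y => w (y + 1)) (x, y) q := by
  constructor
  · rintro ⟨⟨a, b⟩, ⟨⟨ha, hb⟩, hC⟩, hconf⟩
    cases b with
    | zero =>
      obtain rfl : a = w 0 := le_antisymm ha (not_lt.1 (mt (h a ha).2 hC))
      exact absurd (conflict_comm.1 hconf) (not_conflict_last w _)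
    | succ b =>
      refine ⟨(a, b), ⟨⟨ha, Nat.le_of_succ_le_succ hb⟩, hC⟩, ?_⟩
      simpa only [Conflict, Nat.add_lt_add_iff_right] using hconf
  · rintro ⟨⟨a, b⟩, ⟨⟨ha, hb⟩, hC⟩, hconf⟩
    refine ⟨(a, b + 1), ⟨⟨ha, Nat.succ_le_succ hb⟩, hC⟩, ?_⟩
    simpa only [Conflict, Nat.add_lt_add_iff_right] using hconf

theorem BottomRowFull.isTreeComplement_dropRow (h : BottomRowFull w C)
    (hC : IsTreeComplement w (n + 1) C) :
    IsTreeComplement (fun y => w (y + 1)) n (dropRow C) := fun ⟨x, y⟩ hp =>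
  (hC (x, y + 1) ⟨hp.1, Nat.succ_le_succ hp.2⟩).trans h.exists_conflict_iff

theorem LastColumnFull.exists_conflict_iff (h : LastColumnFull w n C) (hw : Monotone w) :
    (∃ q ∈ staircase w (n + 1) \ C, Conflict w (skip (w 0) x, y) q) ↔
      ∃ q ∈ staircase (fun y => w y - 1) (n + 1) \ dropCol (w 0) C,
        Conflict (fun y => w y - 1) (x, y) q := by
  have hle (y : ℕ) : w 0 ≤ w y := hw y.zero_le
  constructor
  · rintro ⟨⟨a, b⟩, ⟨⟨ha, hb⟩, hC⟩, hconf⟩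
    have ha0 : a ≠ w 0 := by
      rintro rfl
      cases b with
      | zero => exact not_conflict_last w _ (conflict_comm.1 hconf)
      | succ b => exact hC (h.column b (Nat.le_of_succ_le_succ hb))
    obtain ⟨a, rfl⟩ := exists_skip_eq ha0
    exact ⟨(a, b), ⟨⟨(skip_le_iff h.pos (hle b)).1 ha, hb⟩, hC⟩,
      (conflict_skip_iff h.pos hle).1 hconf⟩
  · rintro ⟨⟨a, b⟩, ⟨⟨ha, hb⟩, hC⟩, hconf⟩
    exact ⟨(skip (w 0) a, b), ⟨⟨(skip_le_iff h.pos (hle b)).2 ha, hb⟩, hC⟩,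
      (conflict_skip_iff h.pos hle).2 hconf⟩

theorem LastColumnFull.isTreeComplement_iff (h : LastColumnFull w n C) (hw : Monotone w) :
    IsTreeComplement w (n + 1) C ↔
      IsTreeComplement (fun y => w y - 1) (n + 1) (dropCol (w 0) C) := by
  have hle (y : ℕ) : w 0 ≤ w y := hw y.zero_le
  constructor
  · rintro hC ⟨x, y⟩ ⟨hx, hy⟩
    exact (hC (skip (w 0) x, y) ⟨(skip_le_iff h.pos (hle y)).2 hx, hy⟩).trans
      (h.exists_conflict_iff hw)
  · rintro hC ⟨x, y⟩ ⟨hx, hy⟩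
    by_cases hxU : x = w 0
    · subst hxU
      cases y with
      | zero => exact iff_of_false h.last fun ⟨q, _, hq⟩ => not_conflict_last w q hq
      | succ y =>
        exact iff_of_true (h.column y (Nat.le_of_succ_le_succ hy))
          ⟨(w 0 - 1, 0), ⟨⟨Nat.sub_le _ _, Nat.zero_le _⟩, h.penultimate⟩,
            Or.inr ⟨Nat.sub_lt h.pos one_pos, y.succ_pos, le_rfl⟩⟩
    · obtain ⟨u, rfl⟩ := exists_skip_eq hxU
      exact (hC (u, y) ⟨(skip_le_iff h.pos (hle y)).1 hx, hy⟩).trans (h.exists_conflict_iff hw).symm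

@[elab_as_elim]
theorem staircase_induction {motive : (ℕ → ℕ) → ℕ → Prop} (zero : ∀ w, motive w 0)
    (succ : ∀ w n, motive (fun y => w (y + 1)) n →
      (0 < w 0 → motive (fun y => w y - 1) (n + 1)) → motive w (n + 1))
    (w : ℕ → ℕ) (n : ℕ) : motive w n := by
  induction n generalizing w with
  | zero => exact zero w
  | succ n ih =>
    induction hU : w 0 generalizing w with
    | zero => exact succ w n (ih _) fun hpos => absurd hU hpos.ne'
    | succ U ihU => exact succ w n (ih _) fun _ => ihU _ (by rw [hU, Nat.add_sub_cancel])

theorem IsTreeComplement.exists_notMem_column (h : IsTreeComplement w n C) (hw : Monotone w)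
    (hx : x ≤ w 0) : ∃ y ≤ n, (x, y) ∉ C := by
  induction w, n using staircase_induction generalizing C x with
  | zero w => exact ⟨0, le_rfl, isTreeComplement_zero.1 h x hx⟩
  | succ w n ihrow ihcol =>
    rcases h.bottomRowFull_or_lastColumnFull hw with hbot | hcol
    · obtain ⟨y, hy, hC⟩ := ihrow (hbot.isTreeComplement_dropRow h)
        (monotone_dropRow hw) (hx.trans (hw (Nat.le_succ 0)))
      exact ⟨y + 1, Nat.succ_le_succ hy, hC⟩
    · rcases hx.eq_or_lt with rfl | hlt
      · exact ⟨0, Nat.zero_le _, hcol.last⟩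
      · obtain ⟨y, hy, hC⟩ := ihcol hcol.pos ((hcol.isTreeComplement_iff hw).1 h)
          (monotone_dropCol hw) (Nat.le_sub_one_of_lt hlt)
        exact ⟨y, hy, by rwa [dropCol, Set.mem_ofPred_eq, skip_of_lt hlt] at hC⟩

theorem BottomRowFull.isTreeComplement_iff (h : BottomRowFull w C) (hw : Monotone w) :
    IsTreeComplement w (n + 1) C ↔ IsTreeComplement (fun y => w (y + 1)) n (dropRow C) := by
  refine ⟨h.isTreeComplement_dropRow, fun hC => ?_⟩
  rintro ⟨x, _ | y⟩ ⟨hx, hy⟩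
  · refine (h x hx).trans ⟨fun hlt => ?_, fun ⟨q, _, hq⟩ => hx.lt_of_ne ?_⟩
    · obtain ⟨y, hy, hCy⟩ := hC.exists_notMem_column (monotone_dropRow hw)
        (hw (Nat.le_succ 0))
      exact ⟨(w 0, y + 1), ⟨⟨hw (Nat.zero_le _), Nat.succ_le_succ hy⟩, hCy⟩,
        Or.inl ⟨hlt, y.succ_pos, le_rfl⟩⟩
    · rintro (rfl : x = w 0)
      exact not_conflict_last w q hq
  · exact (hC (x, y) ⟨hx, Nat.le_of_succ_le_succ hy⟩).trans h.exists_conflict_iff.symm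

theorem isTreeComplement_iff_isReducedPipeDream (hw : Monotone w) (n : ℕ) (C : Set (ℕ × ℕ)) :
    IsTreeComplement w n C ↔ IsReducedPipeDream w n C := by
  induction w, n using staircase_induction generalizing C with
  | zero w => rw [isTreeComplement_zero, isReducedPipeDream_zero]
  | succ w n ihrow ihcol =>
    have hrow (h : BottomRowFull w C) :
        IsTreeComplement w (n + 1) C ↔ IsReducedPipeDream w (n + 1) C := by
      rw [h.isTreeComplement_iff hw, h.isReducedPipeDream_iff,
        ihrow (monotone_dropRow hw)]
    have hcol (h : LastColumnFull w n C) :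
        IsTreeComplement w (n + 1) C ↔ IsReducedPipeDream w (n + 1) C := by
      rw [h.isTreeComplement_iff hw, h.isReducedPipeDream_iff hw,
        ihcol h.pos (monotone_dropCol hw)]
    exact ⟨fun h => (h.bottomRowFull_or_lastColumnFull hw).elim (fun h' => (hrow h').1 h)
        fun h' => (hcol h').1 h,
      fun h => (h.bottomRowFull_or_lastColumnFull hw).elim (fun h' => (hrow h').2 h)
        fun h' => (hcol h').2 h⟩

end Trees

section LatticePaths

/-- The abscissa of the last point of `APts ν` at height `y`. -/
def rowWidth (ν : List Bool) (y : ℕ) : ℕ :=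
  Nat.findGreatest (fun x => heightAt ν x ≤ y) (eastSteps ν)

variable {x y : ℕ} {ν : List Bool} {p q : ℕ × ℕ} {C T : Set (ℕ × ℕ)}

theorem heightAt_zero (ν : List Bool) : heightAt ν 0 = 0 := by
  unfold heightAt; rfl

theorem heightAt_le_succ (ν : List Bool) (x : ℕ) : heightAt ν x ≤ heightAt ν (x + 1) := by
  induction ν generalizing x with
  | nil => cases x <;> simp [heightAt]
  | cons b ν ih =>
    cases x with
    | zero => exact (heightAt_zero _).trans_le (Nat.zero_le _)
    | succ x =>
      cases b with
      | true => exact Nat.succ_le_succ (ih (x + 1))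
      | false => exact ih x

theorem monotone_heightAt (ν : List Bool) : Monotone (heightAt ν) :=
  monotone_nat_of_le_succ (heightAt_le_succ ν)

theorem le_rowWidth_iff : x ≤ rowWidth ν y ↔ x ≤ eastSteps ν ∧ heightAt ν x ≤ y := by
  refine ⟨fun h => ⟨h.trans (Nat.findGreatest_le _), (monotone_heightAt ν h).trans ?_⟩,
    fun h => Nat.le_findGreatest h.1 h.2⟩
  exact Nat.findGreatest_spec (P := fun x => heightAt ν x ≤ y) (Nat.zero_le _)
    ((heightAt_zero ν).trans_le y.zero_le)

theorem monotone_rowWidth (ν : List Bool) : Monotone (rowWidth ν) := fun _ _ h =>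
  le_rowWidth_iff.2 ((le_rowWidth_iff.1 le_rfl).imp_right fun hle => hle.trans h)

theorem staircase_rowWidth (ν : List Bool) :
    staircase (rowWidth ν) (northSteps ν) = APts ν := by
  ext p
  simp only [staircase, APts, Set.mem_ofPred_eq, le_rowWidth_iff, and_assoc]

theorem conflict_rowWidth_iff (hp : p ∈ APts ν) (hq : q ∈ APts ν) :
    Conflict (rowWidth ν) p q ↔ Incompatible ν p q := by
  simp only [Conflict, Incompatible, ← staircase_rowWidth, staircase, Set.mem_ofPred_eq] at *
  simp only [hp.2, hq.2, and_true]

theorem Compatible.symm (h : Compatible ν p q) : Compatible ν q p := mt Or.symm h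

theorem isNuTree_iff :
    IsNuTree ν T ↔
      T ⊆ APts ν ∧ ∀ p ∈ APts ν, p ∉ T ↔ ∃ q ∈ T, Incompatible ν p q := by
  refine and_congr_right fun hT => ⟨fun ⟨hcompat, hmax⟩ p hp => ⟨fun hpT => ?_, ?_⟩,
    fun h => ⟨fun p hp q hq _ hinc => (h p (hT hp)).2 ⟨q, hq, hinc⟩ hp, ?_⟩⟩
  · by_contra! hall
    refine hpT (hmax (insert p T) (Set.insert_subset hp hT) ?_ (Set.subset_insert p T) ▸
      Set.mem_insert p T)
    exact hcompat.insert fun q hq _ => ⟨hall q hq, Compatible.symm (hall q hq)⟩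
  · rintro ⟨q, hq, hinc⟩ hpT
    refine hcompat hpT hq ?_ hinc
    rintro rfl
    exact hinc.elim (fun h => h.1.false) fun h => h.1.false
  · refine fun T' hT' hcompat hsub => (hsub.antisymm fun p hp => ?_).symm
    by_contra hpT
    obtain ⟨q, hq, hinc⟩ := (h p (hT' hp)).1 hpT
    exact hcompat hp (hsub hq) (ne_of_mem_of_not_mem hq hpT).symm hinc

theorem isNuTree_sdiff_iff (ν : List Bool) (C : Set (ℕ × ℕ)) :
    IsNuTree ν (APts ν \ C) ↔ IsTreeComplement (rowWidth ν) (northSteps ν) C := by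
  rw [isNuTree_iff, and_iff_right Set.sdiff_subset, IsTreeComplement, staircase_rowWidth]
  refine forall₂_congr fun p hp => iff_congr ?_ ?_
  · simp [hp]
  · exact exists_congr fun q => and_congr_right fun hq => (conflict_rowWidth_iff hp hq.1).symm

/-- The ending points of the east steps of `ν`. -/
def eastEnds (ν : List Bool) : Set (ℕ × ℕ) :=
  {p | ∃ i < ν.length, ν.getD i true = false ∧ p = pointAt ν (i + 1)}

theorem mem_eastEnds_true_cons :
    p ∈ eastEnds (true :: ν) ↔ ∃ q ∈ eastEnds ν, p = (q.1, q.2 + 1) := by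
  rw [eastEnds, Set.mem_ofPred_eq, List.length_cons, Nat.exists_lt_succ_left]
  simp [eastEnds, pointAt, and_assoc]

theorem mem_eastEnds_false_cons :
    p ∈ eastEnds (false :: ν) ↔ p = (1, 0) ∨ ∃ q ∈ eastEnds ν, p = (q.1 + 1, q.2) := by
  rw [eastEnds, Set.mem_ofPred_eq, List.length_cons, Nat.exists_lt_succ_left]
  simp [eastEnds, pointAt, and_assoc]

theorem mem_eastEnds_iff :
    p ∈ eastEnds ν ↔ 1 ≤ p.1 ∧ p.1 ≤ eastSteps ν ∧ p.2 = heightAt ν p.1 := by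
  induction ν generalizing p with
  | nil => simp [eastEnds, eastSteps]; omega
  | cons b ν ih =>
    obtain ⟨x, y⟩ := p
    cases b with
    | true =>
      have hsteps : eastSteps (true :: ν) = eastSteps ν := by simp [eastSteps]
      rw [mem_eastEnds_true_cons, hsteps]
      cases x with
      | zero => simp [ih]
      | succ x => simp [ih, heightAt]
    | false =>
      have hsteps : eastSteps (false :: ν) = eastSteps ν + 1 := by simp [eastSteps]
      rw [mem_eastEnds_false_cons, hsteps]
      cases x with
      | zero => simp
      | succ x =>
        rcases x.eq_zero_or_pos with rfl | hx
        · simp [ih, heightAt, heightAt_zero]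
        · simp [ih, heightAt, hx.ne', Nat.one_le_iff_ne_zero]

theorem range_filter_heightAt (ν : List Bool) (y : ℕ) :
    ((List.range (eastSteps ν + 1)).filter fun x => decide (heightAt ν x ≤ y)) =
      List.range (rowWidth ν y + 1) := by
  refine (List.pairwise_lt_range.filter _).eq_of_mem_iff List.pairwise_lt_range fun x => ?_
  rw [List.mem_filter, List.mem_range, List.mem_range, decide_eq_true_eq, Nat.lt_succ_iff,
    Nat.lt_succ_iff, le_rowWidth_iff]

theorem mem_readingList : p ∈ readingList ν ↔ p ∈ APts ν := by
  rw [← staircase_rowWidth]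
  obtain ⟨x, y⟩ := p
  simp [readingList, range_filter_heightAt, staircase, and_comm]

theorem nodup_readingList (ν : List Bool) : (readingList ν).Nodup := by
  rw [readingList, ← List.flatMap_def, List.nodup_flatMap]
  refine ⟨fun y _ => (List.nodup_range.filter _).map fun _ _ h => congrArg Prod.fst h,
    List.nodup_range.imp fun hne p hp hq => ?_⟩
  obtain ⟨x, -, rfl⟩ := List.mem_map.1 hp
  obtain ⟨x', -, hx'⟩ := List.mem_map.1 hq
  exact hne (congrArg Prod.snd hx').symm

theorem map_dOf_filter_readingList (ν : List Bool) (C : Set (ℕ × ℕ)) :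
    ((readingList ν).filter fun p => decide (p ∈ C)).map (dOf ν) =
      crossWord (rowWidth ν) (northSteps ν) C := by
  simp only [readingList, range_filter_heightAt, ← List.flatMap_def, List.filter_flatMap,
    List.map_flatMap, List.filter_map, List.map_map]
  rfl

theorem prodOver_eq_wordPerm (ν : List Bool) (C : Set (ℕ × ℕ)) :
    prodOver ν C = wordPerm (crossWord (rowWidth ν) (northSteps ν) C) := by
  rw [← map_dOf_filter_readingList, wordPerm, List.map_map]
  rfl

theorem ncard_eq_length_crossWord (hC : C ⊆ APts ν) :
    C.ncard = (crossWord (rowWidth ν) (northSteps ν) C).length := by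
  rw [← map_dOf_filter_readingList, List.length_map,
    ← List.toFinset_card_of_nodup ((nodup_readingList ν).filter _), ← Set.ncard_coe_finset]
  congr 1
  ext p
  simp only [List.coe_toFinset, List.mem_filter, mem_readingList, decide_eq_true_eq]
  exact ⟨fun h => ⟨hC h, h⟩, fun h => h.2⟩

theorem mem_minCrosses_rowWidth_iff (hp : p ∈ APts ν) :
    p ∈ minCrosses (rowWidth ν) ↔ p ∉ TminSet ν := by
  obtain ⟨x, y⟩ := p
  have hT : (x, y) ∈ TminSet ν ↔ x = 0 ∨ 1 ≤ x ∧ x ≤ eastSteps ν ∧ y = heightAt ν x :=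
    (and_iff_right hp).trans (or_congr_right mem_eastEnds_iff)
  obtain ⟨hx : x ≤ eastSteps ν, hy : heightAt ν x ≤ y, -⟩ := hp
  simp only [hT, minCrosses, Set.mem_ofPred_eq, le_rowWidth_iff]
  omega

theorem crossWord_compl_TminSet (ν : List Bool) :
    crossWord (rowWidth ν) (northSteps ν) (APts ν \ TminSet ν) =
      dominantWord (rowWidth ν) (northSteps ν) := by
  rw [← crossWord_minCrosses (monotone_rowWidth ν)]
  refine crossWord_congr fun p hp => ?_
  rw [staircase_rowWidth] at hp
  rw [mem_minCrosses_rowWidth_iff hp, Set.mem_sdiff, and_iff_right hp]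

theorem piNu_eq_wordPerm (ν : List Bool) :
    piNu ν = wordPerm (dominantWord (rowWidth ν) (northSteps ν)) := by
  rw [piNu, prodOver_eq_wordPerm, crossWord_compl_TminSet]

theorem lenInv_piNu (ν : List Bool) :
    lenInv (piNu ν) = (dominantWord (rowWidth ν) (northSteps ν)).length := by
  rw [piNu_eq_wordPerm]
  exact isReduced_dominantWord _ _

theorem isNuTree_sdiff_iff_prodOver (hC : C ⊆ APts ν) :
    IsNuTree ν (APts ν \ C) ↔ prodOver ν C = piNu ν ∧ C.ncard = lenInv (piNu ν) := by
  rw [isNuTree_sdiff_iff, isTreeComplement_iff_isReducedPipeDream (monotone_rowWidth ν),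
    IsReducedPipeDream, prodOver_eq_wordPerm, ncard_eq_length_crossWord hC, lenInv_piNu,
    piNu_eq_wordPerm]

end LatticePaths

end NuTree

theorem nuTrees_are_reduced_pipe_dreams (ν : List Bool) :
    (∀ T, IsNuTree ν T →
      prodOver ν (APts ν \ T) = piNu ν ∧ (APts ν \ T).ncard = lenInv (piNu ν)) ∧
    (∀ C ⊆ APts ν, prodOver ν C = piNu ν → C.ncard = lenInv (piNu ν) →
      IsNuTree ν (APts ν \ C)) := by
  refine ⟨fun T hT => ?_, fun C hC hprod hcard =>
    (NuTree.isNuTree_sdiff_iff_prodOver hC).2 ⟨hprod, hcard⟩⟩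
  rw [← NuTree.isNuTree_sdiff_iff_prodOver Set.sdiff_subset, Set.sdiff_sdiff_cancel_left hT.1]
  exact hT
end
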